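/- arXiv:2511.18426 — 2 statements merged into one kernel-verified Lean document; each statement's English description precedes it below -/
import Mathlib

section
/- Let f be a polynomial in two variables over ℂ with zero constant term and let F be its image in the formal power series ring ℂ[[x,y]]. Suppose that F = u · g₁ ⋯ g_r, where u is a unit of ℂ[[x,y]], r ≥ 1, each g_i is irreducible in ℂ[[x,y]], and g_i and g_j are non-associated for i ≠ j. Then the Tjurina number, Milnor number, and δ-invariant satisfy τ(f) ≤ μ(f) ≤ 2δ(f). -/
open MvPolynomial

set_option synthInstance.maxHeartbeats 1000000
set_option maxHeartbeats 2000000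

/-- The local ring `R = ℂ[[x,y]]/(F)`, where `F` is the image in `ℂ[[x,y]]` of `f ∈ ℂ[x,y]`. -/
def CurveGermRing (f : MvPolynomial (Fin 2) ℂ) : Type :=
  MvPowerSeries (Fin 2) ℂ ⧸ Ideal.span {(↑f : MvPowerSeries (Fin 2) ℂ)}

noncomputable instance (f : MvPolynomial (Fin 2) ℂ) : CommRing (CurveGermRing f) :=
  inferInstanceAs
    (CommRing (MvPowerSeries (Fin 2) ℂ ⧸ Ideal.span {(↑f : MvPowerSeries (Fin 2) ℂ)}))

noncomputable instance (f : MvPolynomial (Fin 2) ℂ) : Algebra ℂ (CurveGermRing f) :=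
  inferInstanceAs
    (Algebra ℂ (MvPowerSeries (Fin 2) ℂ ⧸ Ideal.span {(↑f : MvPowerSeries (Fin 2) ℂ)}))

/-- The Milnor number `μ(f) = dim_ℂ ℂ[[x,y]]/(∂f/∂x, ∂f/∂y)`. -/
noncomputable def milnorNumber (f : MvPolynomial (Fin 2) ℂ) : ℕ :=
  Module.finrank ℂ
    (MvPowerSeries (Fin 2) ℂ ⧸ Ideal.span
      {(↑(pderiv 0 f) : MvPowerSeries (Fin 2) ℂ), (↑(pderiv 1 f) : MvPowerSeries (Fin 2) ℂ)})

/-- The Tjurina number `τ(f) = dim_ℂ ℂ[[x,y]]/(F, ∂f/∂x, ∂f/∂y)`. -/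
noncomputable def tjurinaNumber (f : MvPolynomial (Fin 2) ℂ) : ℕ :=
  Module.finrank ℂ
    (MvPowerSeries (Fin 2) ℂ ⧸ Ideal.span
      {(↑f : MvPowerSeries (Fin 2) ℂ),
       (↑(pderiv 0 f) : MvPowerSeries (Fin 2) ℂ), (↑(pderiv 1 f) : MvPowerSeries (Fin 2) ℂ)})

/-- The δ-invariant `δ(f) = dim_ℂ (O̅ / R)`, where `O̅` is the normalization of `R`, i.e. the
integral closure of `R = ℂ[[x,y]]/(F)` in its total ring of fractions `K`, and the quotient is
by the canonical image of `R` in `O̅`. -/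
noncomputable def deltaInvariant (f : MvPolynomial (Fin 2) ℂ) (K : Type) [CommRing K]
    [Algebra (CurveGermRing f) K] [Algebra ℂ K] [IsScalarTower ℂ (CurveGermRing f) K] : ℕ :=
  Module.finrank ℂ
    ((integralClosure (CurveGermRing f) K) ⧸
      LinearMap.range (Algebra.linearMap (CurveGermRing f) (integralClosure (CurveGermRing f) K)))

namespace TJ

/-- The ring of formal power series in one variable. -/
abbrev V : Type := PowerSeries ℂ

theorem mem_maxV (a : V) : a ∈ IsLocalRing.maximalIdeal V ↔ PowerSeries.constantCoeff a = 0 := by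
  rw [IsLocalRing.mem_maximalIdeal, mem_nonunits_iff, PowerSeries.isUnit_iff_constantCoeff,
    isUnit_iff_ne_zero, not_not]

instance : IsAdicComplete (IsLocalRing.maximalIdeal V) V := by
  rw [PowerSeries.maximalIdeal_eq_span_X]; infer_instance

theorem dist_equiv {A : Type*} [CommRing A] (I : Ideal A) [IsAdicComplete I A]
    {P : Polynomial A} (hP : P.IsDistinguishedAt I) :
    ∃ e : (Polynomial A ⧸ Ideal.span {P}) ≃+* (PowerSeries A ⧸ Ideal.span {(P : PowerSeries A)}),
      ∀ h : Polynomial A, e (Ideal.Quotient.mk _ h) = Ideal.Quotient.mk _ (h : PowerSeries A) :=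
  ⟨hP.algEquivQuotient.toRingEquiv, fun h => by simp⟩

theorem dist_dvd {P h : Polynomial V} (hP : P.IsDistinguishedAt (IsLocalRing.maximalIdeal V))
    (hd : (P : PowerSeries V) ∣ (h : PowerSeries V)) : P ∣ h := by
  obtain ⟨e, he⟩ := dist_equiv _ hP
  have h1 : e (Ideal.Quotient.mk _ h) = 0 := by
    rw [he, Ideal.Quotient.eq_zero_iff_mem, Ideal.mem_span_singleton]
    exact hd
  rw [map_eq_zero_iff _ e.injective, Ideal.Quotient.eq_zero_iff_mem,
    Ideal.mem_span_singleton] at h1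
  exact h1

/-- constant coefficient reduction -/
theorem residue_ne_zero {g : PowerSeries V}
    (hg : g.map (PowerSeries.constantCoeff (R := ℂ)) ≠ 0) :
    g.map (IsLocalRing.residue V) ≠ 0 := by
  intro h
  apply hg
  ext n
  have := congrArg (PowerSeries.coeff n) h
  simp only [PowerSeries.coeff_map, map_zero, IsLocalRing.residue_eq_zero_iff] at this ⊢
  exact (mem_maxV _).1 this

theorem dist_map {P : Polynomial V} (hP : P.IsDistinguishedAt (IsLocalRing.maximalIdeal V)) :
    P.map (PowerSeries.constantCoeff (R := ℂ)) = Polynomial.X ^ P.natDegree := by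
  ext n
  rw [Polynomial.coeff_map, Polynomial.coeff_X_pow]
  split_ifs with h
  · rw [h, hP.monic.coeff_natDegree, map_one]
  · rcases lt_or_gt_of_ne h with h | h
    · exact (mem_maxV _).1 (hP.mem h)
    · rw [Polynomial.coeff_eq_zero_of_natDegree_lt h, map_zero]

theorem dist_of_map {P : Polynomial V} (hm : P.Monic)
    (h : P.map (PowerSeries.constantCoeff (R := ℂ)) = Polynomial.X ^ P.natDegree) :
    P.IsDistinguishedAt (IsLocalRing.maximalIdeal V) where
  monic := hm
  mem := by
    intro n hn
    rw [mem_maxV, ← Polynomial.coeff_map, h, Polynomial.coeff_X_pow, if_neg hn.ne]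

theorem hensel0 {W : Polynomial V} (hW : W.Monic)
    (h0 : (W.map (PowerSeries.constantCoeff (R := ℂ))).coeff 0 = 0)
    (hn : W.map (PowerSeries.constantCoeff (R := ℂ)) ≠ Polynomial.X ^ W.natDegree) :
    ∃ P Q : Polynomial V, P.Monic ∧ Q.Monic ∧ W = P * Q ∧ P.natDegree < W.natDegree ∧
      Q.natDegree < W.natDegree := by
  have hg : (W : PowerSeries V).map (PowerSeries.constantCoeff (R := ℂ)) ≠ 0 := by
    rw [← Polynomial.polynomial_map_coe]
    rw [Ne, Polynomial.coe_eq_zero_iff]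
    exact (hW.map (PowerSeries.constantCoeff (R := ℂ))).ne_zero
  obtain ⟨P, u, hP⟩ := PowerSeries.exists_isWeierstrassFactorization (residue_ne_zero hg)
  have hPd := hP.isDistinguishedAt
  obtain ⟨Q, hQ⟩ := dist_dvd hPd ⟨u, hP.eq_mul⟩
  have hQm : Q.Monic := hPd.monic.of_mul_monic_left (hQ ▸ hW)
  have hdeg : W.natDegree = P.natDegree + Q.natDegree := by
    rw [hQ, hPd.monic.natDegree_mul hQm]
  have hQu : (Q : PowerSeries V) = u := by
    have : (P : PowerSeries V) * Q = P * u := by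
      rw [← hP.eq_mul, hQ]; simp
    refine mul_left_cancel₀ ?_ this
    simpa using hPd.monic.ne_zero
  refine ⟨P, Q, hPd.monic, hQm, hQ, ?_, ?_⟩
  · rw [hdeg]
    by_contra hcon
    have hQ0 : Q.natDegree = 0 := by omega
    have : Q = 1 := hQm.natDegree_eq_zero.1 hQ0
    apply hn
    rw [hQ, this, mul_one, dist_map hPd]
  · rw [hdeg]
    by_contra hcon
    have hP0 : P.natDegree = 0 := by omega
    have : P = 1 := hPd.monic.natDegree_eq_zero.1 hP0
    have hWu : (W : PowerSeries V) = u := by rw [hP.eq_mul, this]; simp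
    have h2 := hP.isUnit
    rw [← hWu, PowerSeries.isUnit_iff_constantCoeff, PowerSeries.isUnit_iff_constantCoeff] at h2
    apply h2.ne_zero
    rw [Polynomial.coeff_map] at h0
    simpa using h0

theorem hensel {W : Polynomial V} (hW : W.Monic) (hd : W.natDegree ≠ 0)
    (hn : ∀ a : ℂ, W.map (PowerSeries.constantCoeff (R := ℂ)) ≠
      (Polynomial.X - Polynomial.C a) ^ W.natDegree) :
    ∃ P Q : Polynomial V, P.Monic ∧ Q.Monic ∧ W = P * Q ∧ P.natDegree < W.natDegree ∧
      Q.natDegree < W.natDegree := by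
  have hdd : (W.map (PowerSeries.constantCoeff (R := ℂ))).degree ≠ 0 := by
    rw [hW.degree_map, Polynomial.degree_eq_natDegree hW.ne_zero]
    exact_mod_cast hd
  obtain ⟨a, ha⟩ := IsAlgClosed.exists_root _ hdd
  set c : V := PowerSeries.C a with hc
  have hmc : (W.comp (Polynomial.X + Polynomial.C c)).map (PowerSeries.constantCoeff (R := ℂ))
      = (W.map (PowerSeries.constantCoeff (R := ℂ))).comp (Polynomial.X + Polynomial.C a) := by
    rw [Polynomial.map_comp]; simp [hc]
  have hdeg : (W.comp (Polynomial.X + Polynomial.C c)).natDegree = W.natDegree := by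
    rw [Polynomial.natDegree_comp]; simp
  obtain ⟨P, Q, hP, hQ, h, h1, h2⟩ := hensel0 (W := W.comp (Polynomial.X + Polynomial.C c))
    (hW.comp_X_add_C c) (by
      rw [hmc, Polynomial.coeff_zero_eq_eval_zero, Polynomial.eval_comp]
      simpa using ha) (by
      rw [hdeg, hmc]
      intro hcon
      apply hn a
      have := congrArg (fun p => Polynomial.comp p (Polynomial.X - Polynomial.C a)) hcon
      simpa [Polynomial.comp_assoc] using this)
  rw [hdeg] at h1 h2
  refine ⟨P.comp (Polynomial.X - Polynomial.C c), Q.comp (Polynomial.X - Polynomial.C c),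
    hP.comp_X_sub_C c, hQ.comp_X_sub_C c, ?_, ?_, ?_⟩
  · rw [← Polynomial.mul_comp, ← h, Polynomial.comp_assoc]; simp
  · rw [Polynomial.natDegree_comp]; simpa using h1
  · rw [Polynomial.natDegree_comp]; simpa using h2

end TJ

namespace TJ

/-- substitution `x = t^N` -/
noncomputable abbrev ex (N : ℕ) (hN : N ≠ 0) : V →+* V :=
  (PowerSeries.expand (R := ℂ) N hN : V →ₐ[ℂ] V).toRingHom

theorem ex_ex (M N : ℕ) (hM : M ≠ 0) (hN : N ≠ 0) :
    (ex M hM).comp (ex N hN) = ex (M * N) (mul_ne_zero hM hN) := by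
  ext1 a
  exact (PowerSeries.expand_mul M hM N hN a).symm

theorem ex_congr {M N : ℕ} (h : M = N) {hM : M ≠ 0} {hN : N ≠ 0} : ex M hM = ex N hN := by
  subst h; rfl

/-- `W` splits after a substitution. -/
def PS (W : Polynomial V) : Prop := ∃ (N : ℕ) (hN : N ≠ 0), (W.map (ex N hN)).Splits

theorem PS.mul {P Q : Polynomial V} (hP : PS P) (hQ : PS Q) : PS (P * Q) := by
  obtain ⟨M, hM, h1⟩ := hP
  obtain ⟨N, hN, h2⟩ := hQ
  refine ⟨M * N, mul_ne_zero hM hN, ?_⟩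
  rw [Polynomial.map_mul]
  refine Polynomial.Splits.mul ?_ ?_
  · have := h1.map (ex N hN)
    rw [Polynomial.map_map, ex_ex] at this
    rwa [ex_congr (mul_comm N M)] at this
  · have := h2.map (ex M hM)
    rwa [Polynomial.map_map, ex_ex] at this

theorem PS.of_ex {P : Polynomial V} {q : ℕ} {hq : q ≠ 0} (h : PS (P.map (ex q hq))) : PS P := by
  obtain ⟨M, hM, h1⟩ := h
  rw [Polynomial.map_map, ex_ex] at h1
  exact ⟨_, _, h1⟩

theorem PS.of_comp {P : Polynomial V} {c : V}
    (h : PS (P.comp (Polynomial.X - Polynomial.C c))) : PS P := by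
  obtain ⟨M, hM, h1⟩ := h
  refine ⟨M, hM, ?_⟩
  have h2 := h1.comp_X_add_C (ex M hM c)
  rw [Polynomial.map_comp, Polynomial.comp_assoc] at h2
  simpa using h2

theorem PS.scale {P : Polynomial V} (hP : P.Monic) {s : V} (h : PS P) :
    PS (P.scaleRoots s) := by
  obtain ⟨M, hM, h1⟩ := h
  refine ⟨M, hM, ?_⟩
  rw [Polynomial.map_scaleRoots _ _ _ (by rw [hP.leadingCoeff, map_one]; exact one_ne_zero)]
  exact h1.scaleRoots _

theorem tschirn (W : Polynomial V) (hW : W.Monic) (n : ℕ) (hn : W.natDegree = n + 1) :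
    ∃ c : V, (W.comp (Polynomial.X - Polynomial.C c)).coeff n = 0 := by
  let c : V := PowerSeries.C ((n + 1 : ℂ)⁻¹) * W.coeff n
  refine ⟨c, ?_⟩
  have h1 : W.comp (Polynomial.X - Polynomial.C c) = Polynomial.taylor (-c) W := by
    rw [Polynomial.taylor_apply]; simp [sub_eq_add_neg]
  rw [h1, Polynomial.taylor_coeff]
  have h2 : Polynomial.hasseDeriv n W = Polynomial.C (W.coeff n) +
      Polynomial.C ((n + 1 : ℕ) : V) * Polynomial.X := by
    ext1 k
    rw [Polynomial.hasseDeriv_coeff]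
    rcases k with _ | _ | k
    · simp
    · have : W.coeff (n + 1) = 1 := by rw [← hn]; exact hW.coeff_natDegree
      simp only [Polynomial.coeff_add, Polynomial.coeff_C_mul, Polynomial.coeff_X]
      rw [show 0 + 1 + n = n + 1 by ring, this, Polynomial.coeff_C_succ]
      simp
    · rw [Polynomial.coeff_eq_zero_of_natDegree_lt (by omega)]
      simp only [Polynomial.coeff_add, Polynomial.coeff_C_mul, Polynomial.coeff_X,
        Polynomial.coeff_C_succ]
      simp
  rw [h2]
  have h3 : ((n + 1 : ℕ) : V) * c = W.coeff n := by
    have : ((n + 1 : ℕ) : V) = PowerSeries.C ((n + 1 : ℂ)) := by simp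
    rw [this, ← mul_assoc, ← map_mul, mul_inv_cancel₀ (by exact_mod_cast Nat.succ_ne_zero n)]
    simp
  simp only [Polynomial.eval_add, Polynomial.eval_C, Polynomial.eval_mul, Polynomial.eval_X]
  rw [mul_neg, h3, add_neg_cancel]

open scoped Nat in
theorem scaling (W : Polynomial V) (hW : W.Monic) (n : ℕ) (hn : W.natDegree = n)
    (hne : W ≠ Polynomial.X ^ n) :
    ∃ (q : ℕ) (hq : q ≠ 0) (p : ℕ) (U : Polynomial V), U.Monic ∧ U.natDegree = n ∧
      W.map (ex q hq) = U.scaleRoots (PowerSeries.X ^ p) ∧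
      ∃ i < n, PowerSeries.constantCoeff (U.coeff i) ≠ 0 := by
  classical
  have hex : ∃ i < n, W.coeff i ≠ 0 := by
    by_contra hcon
    push Not at hcon
    apply hne
    ext1 k
    rw [Polynomial.coeff_X_pow]
    split_ifs with h
    · rw [h, ← hn, hW.coeff_natDegree]
    · rcases lt_or_gt_of_ne h with h | h
      · exact hcon k h
      · exact Polynomial.coeff_eq_zero_of_natDegree_lt (hn ▸ h)
  set key : ℕ → ℕ := fun i => (W.coeff i).order.toNat * (n ! / (n - i)) with hkey
  have hkeymul : ∀ i < n, (n - i) * key i = n ! * (W.coeff i).order.toNat := by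
    intro i hi
    have : (n - i) * (n ! / (n - i)) = n ! :=
      Nat.mul_div_cancel' (Nat.dvd_factorial (by omega) (by omega))
    calc _ = (W.coeff i).order.toNat * ((n - i) * (n ! / (n - i))) := by rw [hkey]; ring
      _ = _ := by rw [this]; ring
  set s := (Finset.range n).filter (fun i => W.coeff i ≠ 0) with hs
  have hsne : s.Nonempty := by
    obtain ⟨i, hi, h⟩ := hex
    exact ⟨i, by simp [hs, hi, h]⟩
  obtain ⟨i0, hi0, hmin⟩ := s.exists_min_image key hsne
  simp only [hs, Finset.mem_filter, Finset.mem_range] at hi0 hmin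
  have hq : n ! ≠ 0 := Nat.factorial_ne_zero n
  have hexp : ∀ i, ex (n !) hq (W.coeff i) =
      PowerSeries.X ^ (n ! * (W.coeff i).order.toNat) *
        ex (n !) hq (PowerSeries.divXPowOrder (W.coeff i)) := by
    intro i
    conv_lhs => rw [← PowerSeries.X_pow_order_mul_divXPowOrder (f := W.coeff i)]
    rw [map_mul, map_pow]
    congr 1
    rw [show ex (n !) hq PowerSeries.X = PowerSeries.X ^ (n !) from
      PowerSeries.expand_X (n !) hq, ← pow_mul]
  have hdvd : ∀ i : Fin n, ∃ d : V, ex (n !) hq (W.coeff i) =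
      PowerSeries.X ^ (key i0 * (n - i)) * d := by
    intro i
    by_cases h : W.coeff i = 0
    · exact ⟨0, by rw [h]; simp⟩
    · rw [hexp]
      refine Dvd.dvd.mul_right (pow_dvd_pow _ ?_) _
      rw [← hkeymul i i.2, mul_comm]
      exact Nat.mul_le_mul_left _ (hmin i ⟨i.2, h⟩)
  choose d hd using hdvd
  let U : Polynomial V := Polynomial.X ^ n + ∑ i : Fin n, Polynomial.C (d i) * Polynomial.X ^ (i : ℕ)
  have hUdeg : (∑ i : Fin n, Polynomial.C (d i) * Polynomial.X ^ (i : ℕ)).degree < (n : WithBot ℕ) :=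
    Polynomial.degree_sum_fin_lt d
  have hUm : U.Monic := Polynomial.monic_X_pow_add hUdeg
  have hUn : U.natDegree = n := Polynomial.natDegree_eq_of_degree_eq_some (by
    rw [show U.degree = (Polynomial.X ^ n : Polynomial V).degree from
      Polynomial.degree_add_eq_left_of_degree_lt (by simpa using hUdeg)]; simp)
  have hUc : ∀ i : Fin n, U.coeff i = d i := by
    intro i
    have : (i : ℕ) ≠ n := i.2.ne
    simp only [U, Polynomial.coeff_add, Polynomial.coeff_X_pow, Polynomial.finsetSum_coeff,
      Polynomial.coeff_C_mul, this, if_false, zero_add]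
    rw [Finset.sum_eq_single i]
    · simp
    · intro b _ hb
      rw [if_neg (fun h => hb (Fin.ext h.symm)), mul_zero]
    · simp
  refine ⟨n !, hq, key i0, U, hUm, hUn, ?_, i0, hi0.1, ?_⟩
  · ext1 k
    rw [Polynomial.coeff_map, Polynomial.coeff_scaleRoots, hUn]
    rcases lt_trichotomy k n with h | h | h
    · rw [hUc ⟨k, h⟩, hd ⟨k, h⟩, ← pow_mul, mul_comm]
    · rw [h, Nat.sub_self, pow_zero, mul_one]
      have e1 : W.coeff n = 1 := by rw [← hn]; exact hW.coeff_natDegree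
      have e2 : U.coeff n = 1 := by
        have := hUm.coeff_natDegree
        rwa [hUn] at this
      rw [e1, e2, map_one]
    · rw [Polynomial.coeff_eq_zero_of_natDegree_lt (hn ▸ h),
        Polynomial.coeff_eq_zero_of_natDegree_lt (hUn ▸ h)]
      simp
  · have h1 := hd ⟨i0, hi0.1⟩
    simp only at h1
    rw [hexp, ← hkeymul i0 hi0.1, mul_comm (n - i0)] at h1
    have h2 := mul_left_cancel₀ (pow_ne_zero _ PowerSeries.X_ne_zero) h1
    rw [hUc ⟨i0, hi0.1⟩, ← h2]
    show PowerSeries.constantCoeff (PowerSeries.expand _ _ _) ≠ 0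
    rw [PowerSeries.constantCoeff_expand, PowerSeries.constantCoeff_divXPowOrder]
    exact PowerSeries.coeff_order hi0.2

theorem puiseux (n : ℕ) : ∀ W : Polynomial V, W.Monic → W.natDegree = n → PS W := by
  induction n using Nat.strong_induction_on with
  | _ n ih =>
  intro W hW hn
  rcases n with _ | n
  · rw [hW.natDegree_eq_zero] at hn
    exact ⟨1, one_ne_zero, by rw [hn]; simp⟩
  obtain ⟨c, hc⟩ := tschirn W hW n hn
  refine PS.of_comp (c := c) ?_
  set W' := W.comp (Polynomial.X - Polynomial.C c) with hW'
  have hm' : W'.Monic := hW.comp_X_sub_C c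
  have hd' : W'.natDegree = n + 1 := by rw [hW', Polynomial.natDegree_comp]; simpa using hn
  by_cases hX : W' = Polynomial.X ^ (n + 1)
  · refine ⟨1, one_ne_zero, ?_⟩
    rw [hX]
    simp only [Polynomial.map_pow, Polynomial.map_X]
    exact Polynomial.Splits.X.pow _
  obtain ⟨q, hq, p, U, hUm, hUn, hU, i, hi, hi0⟩ := scaling W' hm' (n + 1) hd' hX
  refine PS.of_ex (q := q) (hq := hq) ?_
  rw [hU]
  refine PS.scale hUm ?_
  have hUc : U.coeff n = 0 := by
    have := congrArg (fun P => Polynomial.coeff P n) hU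
    simp only [Polynomial.coeff_map, hc, map_zero, Polynomial.coeff_scaleRoots, hUn] at this
    exact (mul_eq_zero.1 this.symm).resolve_right (pow_ne_zero _ (pow_ne_zero _ PowerSeries.X_ne_zero))
  obtain ⟨P, Q, hP, hQ, hPQ, h1, h2⟩ := hensel hUm (by omega) (by
    intro a ha
    rw [hUn] at ha
    have h3 := congrArg (fun P => Polynomial.coeff P n) ha
    simp only [Polynomial.coeff_map, hUc, map_zero] at h3
    rw [sub_eq_add_neg, ← Polynomial.C_neg, Polynomial.coeff_X_add_C_pow] at h3
    have ha0 : a = 0 := by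
      have hn0 : ((n : ℂ) + 1) ≠ 0 := by exact_mod_cast Nat.succ_ne_zero n
      simpa [hn0] using h3
    have h4 := congrArg (fun P => Polynomial.coeff P i) ha
    simp only [ha0, map_zero, sub_zero, Polynomial.coeff_map, Polynomial.coeff_X_pow, hi.ne, if_false] at h4
    exact hi0 h4)
  rw [hPQ]
  rw [hUn] at h1 h2
  exact (ih _ h1 P hP rfl).mul (ih _ h2 Q hQ rfl)

end TJ

namespace TJ
section len
variable {k M M' : Type*} [Field k] [AddCommGroup M] [Module k M] [AddCommGroup M'] [Module k M']

/-- relative length of `T` over `P` -/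
noncomputable def dl (P T : Submodule k M) : ℕ∞ := Module.length k (T.map P.mkQ)

theorem dl_mono {P T T' : Submodule k M} (h : T ≤ T') : dl P T ≤ dl P T' :=
  Module.length_le_of_injective (Submodule.inclusion (Submodule.map_mono h))
    (Submodule.inclusion_injective _)

theorem length_mono {T T' : Submodule k M} (h : T ≤ T') : Module.length k T ≤ Module.length k T' :=
  Module.length_le_of_injective (Submodule.inclusion h)
    (Submodule.inclusion_injective _)

theorem length_map {T : Submodule k M} (f : M →ₗ[k] M') :
    Module.length k T = Module.length k (T ⊓ LinearMap.ker f : Submodule k M) + 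
      Module.length k (T.map f) := by
  refine Module.length_eq_add_of_exact (Submodule.inclusion inf_le_left) (f.submoduleMap T)
    (Submodule.inclusion_injective _) (f.submoduleMap_surjective T) ?_
  intro x
  constructor
  · intro h
    refine ⟨⟨x, x.2, ?_⟩, rfl⟩
    have := congrArg Subtype.val h
    simpa using this
  · rintro ⟨y, rfl⟩
    ext
    exact y.2.2

theorem dl_of_ker {P T : Submodule k M} (f : M →ₗ[k] M') (h : LinearMap.ker f = P) :
    dl P T = Module.length k (T.map f) := by
  subst h
  have : T.map f = (T.map (LinearMap.ker f).mkQ).map ((LinearMap.ker f).liftQ f le_rfl) := by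
    rw [← Submodule.map_comp, Submodule.liftQ_mkQ]
  rw [this]
  refine LinearEquiv.length_eq (Submodule.equivMapOfInjective _ ?_ _)
  rw [← LinearMap.ker_eq_bot]
  exact Submodule.ker_liftQ_eq_bot _ _ _ le_rfl

theorem dl_add {P Q T : Submodule k M} (h1 : P ≤ Q) (h2 : Q ≤ T) :
    dl P T = dl P Q + dl Q T := by
  have e := length_map (T := T.map P.mkQ) (P.liftQ Q.mkQ (by simpa using h1))
  rw [← Submodule.map_comp, Submodule.liftQ_mkQ] at e
  have : T.map P.mkQ ⊓ LinearMap.ker (P.liftQ Q.mkQ (by simpa using h1)) = Q.map P.mkQ := by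
    rw [Submodule.ker_liftQ, Submodule.ker_mkQ]
    exact inf_eq_right.2 (Submodule.map_mono h2)
  rw [this] at e
  exact e

theorem dl_anti {P Q T : Submodule k M} (h1 : P ≤ Q) : dl Q T ≤ dl P T := by
  have e := length_map (T := T.map P.mkQ) (P.liftQ Q.mkQ (by simpa using h1))
  rw [← Submodule.map_comp, Submodule.liftQ_mkQ] at e
  rw [dl, dl, e]
  exact le_add_self

theorem dl_map {P T : Submodule k M} (f : M →ₗ[k] M') (hf : Function.Injective f) :
    dl (P.map f) (T.map f) = dl P T := by
  rw [dl_of_ker (P := P) ((P.map f).mkQ.comp f), dl, Submodule.map_comp]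
  rw [LinearMap.ker_comp, Submodule.ker_mkQ, Submodule.comap_map_eq_of_injective hf]

theorem dl_quot {P : Submodule k M} : dl P ⊤ = Module.length k (M ⧸ P) := by
  rw [dl, Submodule.map_top, Submodule.range_mkQ]
  exact Module.length_top

theorem dl_range {P : Submodule k M} (f : M →ₗ[k] M') (hf : LinearMap.ker f ≤ P) :
    dl (P.map f) (LinearMap.range f) = Module.length k (M ⧸ P) := by
  rw [← dl_quot, dl_of_ker (P := P) ((P.map f).mkQ.comp f), dl, Submodule.map_comp,
    Submodule.map_top]
  rw [LinearMap.ker_comp, Submodule.ker_mkQ, Submodule.comap_map_eq, sup_eq_left.2 hf]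

theorem dl_eq_zero {P T : Submodule k M} : dl P T = 0 ↔ T ≤ P := by
  rw [dl, Module.length_eq_zero_iff, Submodule.subsingleton_iff_eq_bot, ← le_bot_iff,
    Submodule.map_le_iff_le_comap, Submodule.comap_bot, Submodule.ker_mkQ]

theorem dl_self {P : Submodule k M} : dl P P = 0 := dl_eq_zero.2 le_rfl

theorem dl_lt {P T T' : Submodule k M} (h : P ≤ T) (h' : T < T') : dl P T + 1 ≤ dl P T' := by
  rw [dl_add h h'.le]
  gcongr
  rw [Order.one_le_iff_ne_zero, Ne, dl_eq_zero]
  exact not_le_of_gt h'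

theorem dl_inf {T : Submodule k M} (f : M →ₗ[k] M') :
    dl (T ⊓ LinearMap.ker f) T = Module.length k (T.map f) := by
  have h1 : T.map f = LinearMap.range (f.comp T.subtype) := by
    rw [LinearMap.range_comp, Submodule.range_subtype]
  have h2 : (LinearMap.ker (f.comp T.subtype)).map T.subtype = T ⊓ LinearMap.ker f := by
    rw [LinearMap.ker_comp, Submodule.map_comap_subtype]
  have h3 := dl_map (P := LinearMap.ker (f.comp T.subtype)) (T := ⊤) T.subtype
    T.injective_subtype
  rw [h2, Submodule.map_top, Submodule.range_subtype] at h3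
  rw [h3, dl_of_ker (f.comp T.subtype) rfl, h1, Submodule.map_top]

theorem dl_rel {R O : Submodule k M} :
    dl R O = Module.length k (O ⧸ R.comap O.subtype) := by
  have h1 : R.comap O.subtype = LinearMap.ker (R.mkQ.comp O.subtype) := by
    rw [LinearMap.ker_comp, Submodule.ker_mkQ]
  rw [h1, ← dl_quot, dl_of_ker (R.mkQ.comp O.subtype) rfl, dl, Submodule.map_comp, Submodule.map_top,
    Submodule.range_subtype]

theorem dl_dual {R O Q : Submodule k M} (hfin : dl R O ≠ ⊤) (β : M →ₗ[k] M →ₗ[k] k)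
    (h : ∀ q ∈ Q, ∀ w ∈ R, β q w = 0) :
    dl (Q ⊓ LinearMap.ker ((Module.Dual.transpose O.subtype).comp β)) Q ≤ dl R O := by
  rw [dl_inf]
  have h1 : Q.map ((Module.Dual.transpose O.subtype).comp β) ≤
      (R.comap O.subtype).dualAnnihilator := by
    rintro _ ⟨q, hq, rfl⟩
    rw [Submodule.mem_dualAnnihilator]
    intro w hw
    exact h q hq w hw
  refine (length_mono h1).trans ?_
  rw [dl_rel] at hfin ⊢
  rw [← (Submodule.dualQuotEquivDualAnnihilator (R.comap O.subtype)).length_eq]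
  have hf : IsFiniteLength k (O ⧸ R.comap O.subtype) := Module.length_ne_top_iff.1 hfin
  have : IsNoetherian k (O ⧸ R.comap O.subtype) := (isFiniteLength_iff_isNoetherian_isArtinian.1 hf).1
  rw [Module.length_eq_finrank, Module.length_eq_finrank, Subspace.dual_finrank_eq]

/-- index comparison -/
theorem dl_scale {R O : Submodule k M} (hRO : R ≤ O) (hfin : dl R O ≠ ⊤) (s : M →ₗ[k] M)
    (hs : Function.Injective s) (h1 : R.map s ≤ R) (h2 : O.map s ≤ O) :
    dl (R.map s) R = dl (O.map s) O := by
  have e1 := dl_add h1 hRO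
  have e2 := dl_add (Submodule.map_mono (f := s) hRO) h2
  rw [dl_map s hs] at e2
  rw [e1, add_comm] at e2
  exact ENat.add_right_injective_of_ne_top hfin e2

theorem dl_pow {R : Submodule k M} (s : M →ₗ[k] M) (hs : Function.Injective s) (h1 : R.map s ≤ R)
    (h : dl (R.map s) R ≠ ⊤) (m : ℕ) : dl (R.map (s ^ m)) R ≠ ⊤ ∧ R.map (s ^ m) ≤ R := by
  induction m with
  | zero =>
    have : R.map (1 : M →ₗ[k] M) = R := Submodule.map_id R
    rw [pow_zero, this]
    refine ⟨?_, le_rfl⟩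
    rw [dl_self]
    simp
  | succ m ih =>
    have e : R.map (s ^ (m + 1)) = (R.map (s ^ m)).map s := by
      rw [pow_succ', ← Submodule.map_comp]; rfl
    have h2 : (R.map (s ^ m)).map s ≤ R.map s := Submodule.map_mono ih.2
    rw [e]
    refine ⟨?_, h2.trans h1⟩
    rw [dl_add h2 h1, dl_map s hs]
    exact WithTop.add_ne_top.2 ⟨ih.1, h⟩

/-- finite index from a bounded denominator -/
theorem dl_fin {R O : Submodule k M} (s : M →ₗ[k] M) (hs : Function.Injective s)
    (h1 : R.map s ≤ R) (h : dl (R.map s) R ≠ ⊤) (m : ℕ) (hm : O.map (s ^ m) ≤ R) :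
    dl R O ≠ ⊤ := by
  have hsm : Function.Injective (s ^ m) := by
    rw [Module.End.coe_pow]; exact hs.iterate m
  rw [← dl_map (s ^ m) hsm]
  exact ne_top_of_le_ne_top (dl_pow s hs h1 h m).1 (dl_mono hm)

end len
end TJ

namespace TJ

/-- primitive root -/
noncomputable def zt (N : ℕ) : ℂ := Complex.exp (2 * ↑Real.pi * Complex.I / ↑N)

theorem zt_prim (N : ℕ) (hN : N ≠ 0) : IsPrimitiveRoot (zt N) N := Complex.isPrimitiveRoot_exp N hN

/-- the automorphism `t ↦ ζ t` -/
noncomputable def sg (N : ℕ) : V →+* V := PowerSeries.rescale (zt N)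

theorem sg_inj (N : ℕ) (hN : N ≠ 0) : Function.Injective (sg N) := by
  have h : zt N * (zt N)⁻¹ = 1 := mul_inv_cancel₀ ((zt_prim N hN).ne_zero hN)
  intro a b hab
  have := congrArg (PowerSeries.rescale (zt N)⁻¹) hab
  simp only [sg, PowerSeries.rescale_rescale, h, PowerSeries.rescale_one] at this
  simpa using this

theorem sg_ex (N : ℕ) (hN : N ≠ 0) (a : V) : sg N (ex N hN a) = ex N hN a := by
  ext m
  show PowerSeries.coeff m (PowerSeries.rescale _ (PowerSeries.expand N hN a)) =
    PowerSeries.coeff m (PowerSeries.expand N hN a)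
  rw [PowerSeries.coeff_rescale, PowerSeries.coeff_expand]
  split_ifs with h
  · rw [((zt_prim N hN).pow_eq_one_iff_dvd m).2 h, one_mul]
  · simp

theorem sg_fix (N : ℕ) (hN : N ≠ 0) (a : V) (h : sg N a = a) : ∃ b, ex N hN b = a := by
  refine ⟨PowerSeries.mk fun m => PowerSeries.coeff (N * m) a, ?_⟩
  ext m
  show PowerSeries.coeff m (PowerSeries.expand N hN _) = _
  rw [PowerSeries.coeff_expand]
  split_ifs with hd
  · rw [PowerSeries.coeff_mk, Nat.mul_div_cancel' hd]
  · have h1 := congrArg (PowerSeries.coeff m) h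
    rw [sg, PowerSeries.coeff_rescale] at h1
    have h2 : zt N ^ m ≠ 1 := fun h => hd (((zt_prim N hN).pow_eq_one_iff_dvd m).1 h)
    have h3 : (zt N ^ m - 1) * PowerSeries.coeff m a = 0 := by rw [sub_mul, h1, one_mul, sub_self]
    exact ((mul_eq_zero.1 h3).resolve_left (sub_ne_zero.2 h2)).symm

theorem ex_inj (N : ℕ) (hN : N ≠ 0) : Function.Injective (ex N hN) := by
  intro a b hab
  ext m
  have := congrArg (PowerSeries.coeff (N * m)) hab
  change PowerSeries.coeff (N * m) (PowerSeries.expand N hN a) =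
    PowerSeries.coeff (N * m) (PowerSeries.expand N hN b) at this
  rwa [PowerSeries.coeff_expand_mul, PowerSeries.coeff_expand_mul] at this

theorem ex_X (N : ℕ) (hN : N ≠ 0) : ex N hN PowerSeries.X = PowerSeries.X ^ N :=
  PowerSeries.expand_X N hN

theorem lift_poly (N : ℕ) (hN : N ≠ 0) (P : Polynomial V) (h : P.map (sg N) = P) :
    ∃ p : Polynomial V, p.map (ex N hN) = P := by
  have : P ∈ (Polynomial.mapRingHom (ex N hN)).range := by
    rw [Polynomial.mem_map_range]
    intro m
    have h1 := congrArg (fun Q => Polynomial.coeff Q m) h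
    simp only [Polynomial.coeff_map] at h1
    exact sg_fix N hN _ h1
  exact this

theorem assoc_X {f : V} (hf : f ≠ 0) : Associated (PowerSeries.X ^ f.order.toNat) f := by
  obtain ⟨u, hu⟩ := PowerSeries.isUnit_divided_by_X_pow_order hf
  refine ⟨u, ?_⟩
  rw [hu]
  exact PowerSeries.X_pow_order_mul_divXPowOrder

/-- distinct roots of `W` after substitution -/
structure RD (W : Polynomial V) (n N : ℕ) (hN : N ≠ 0) (a : Fin n → V) : Prop where
  inj : Function.Injective a
  prod : W.map (ex N hN) = ∏ k, (Polynomial.X - Polynomial.C (a k))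

/-- evaluation at a root -/
noncomputable def evV {n N : ℕ} (hN : N ≠ 0) (a : Fin n → V) (k : Fin n) : Polynomial V →+* V :=
  Polynomial.eval₂RingHom (ex N hN) (a k)

theorem evV_def {n N : ℕ} (hN : N ≠ 0) (a : Fin n → V) (k : Fin n) (p : Polynomial V) :
    evV hN a k p = (p.map (ex N hN)).eval (a k) := by
  rw [evV, Polynomial.coe_eval₂RingHom, Polynomial.eval_map]

theorem evV_C {n N : ℕ} (hN : N ≠ 0) (a : Fin n → V) (k : Fin n) (v : V) :
    evV hN a k (Polynomial.C v) = ex N hN v := by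
  simp [evV]

namespace RD
variable {W : Polynomial V} {n N : ℕ} {hN : N ≠ 0} {a : Fin n → V} (H : RD W n N hN a)
include H

theorem monic : W.Monic := by
  have : (W.map (ex N hN)).Monic := by
    rw [H.prod]; exact Polynomial.monic_prod_X_sub_C _ _
  exact Polynomial.monic_of_injective (ex_inj N hN) this

theorem natDegree : W.natDegree = n := by
  have := congrArg Polynomial.natDegree H.prod
  rw [Polynomial.natDegree_map_eq_of_injective (ex_inj N hN)] at this
  rw [this]
  simp

theorem ev_W (k : Fin n) : evV hN a k W = 0 := by
  rw [evV_def, H.prod, Polynomial.eval_prod]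
  exact Finset.prod_eq_zero (Finset.mem_univ k) (by simp)

theorem exists_perm : ∃ π : Equiv.Perm (Fin n), ∀ k, sg N (a k) = a (π k) := by
  have h1 : ∀ k, ∃ j, sg N (a k) = a j := by
    intro k
    have h2 : (W.map (ex N hN)).eval (sg N (a k)) = 0 := by
      have h3 := congrArg (sg N) (H.ev_W k)
      rw [evV_def, map_zero, ← Polynomial.eval_map_apply] at h3
      rw [← h3, Polynomial.map_map]
      congr 2
      ext1 v
      exact (sg_ex N hN v).symm
    rw [H.prod, Polynomial.eval_prod, Finset.prod_eq_zero_iff] at h2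
    obtain ⟨j, -, hj⟩ := h2
    exact ⟨j, by simpa [sub_eq_zero] using hj⟩
  choose f hf using h1
  have hinj : Function.Injective f := by
    intro i j hij
    apply H.inj
    apply sg_inj N hN
    rw [hf, hf, hij]
  exact ⟨Equiv.ofBijective f hinj.bijective_of_finite, hf⟩

/-- the permutation of the roots -/
noncomputable def perm : Equiv.Perm (Fin n) := H.exists_perm.choose

theorem sg_a (k : Fin n) : sg N (a k) = a (H.perm k) := H.exists_perm.choose_spec k

theorem sg_ev (k : Fin n) (p : Polynomial V) : sg N (evV hN a k p) = evV hN a (H.perm k) p := by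
  rw [evV_def, evV_def, ← Polynomial.eval_map_apply, Polynomial.map_map, H.sg_a]
  congr 2
  ext1 v
  exact sg_ex N hN v

theorem dvd_of_ev (p : Polynomial V) (h : ∀ k, evV hN a k p = 0) : W ∣ p := by
  rw [← Polynomial.modByMonic_eq_zero_iff_dvd H.monic]
  by_cases hn : n = 0
  · have : W = 1 := H.monic.natDegree_eq_zero.1 (by rw [H.natDegree, hn])
    rw [this, Polynomial.modByMonic_one]
  have h1 : (p %ₘ W).map (ex N hN) = 0 := by
    refine Polynomial.eq_zero_of_natDegree_lt_card_of_eval_eq_zero _ H.inj (fun k => ?_) ?_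
    · rw [← evV_def]
      have h2 := congrArg (evV hN a k) (Polynomial.modByMonic_add_div p W)
      rw [map_add, map_mul, H.ev_W, zero_mul, add_zero, h] at h2
      exact h2
    · rw [Polynomial.natDegree_map_eq_of_injective (ex_inj N hN), Fintype.card_fin]
      have := Polynomial.natDegree_modByMonic_lt p H.monic (fun h1 => hn (by
        rw [← H.natDegree, h1, Polynomial.natDegree_one]))
      rwa [H.natDegree] at this
  exact (Polynomial.map_eq_zero_iff (ex_inj N hN)).1 h1

theorem ev_eq_zero_iff (p : Polynomial V) : (∀ k, evV hN a k p = 0) ↔ W ∣ p := by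
  refine ⟨H.dvd_of_ev p, ?_⟩
  rintro ⟨q, rfl⟩ k
  rw [map_mul, H.ev_W, zero_mul]

theorem ev_deriv (k : Fin n) :
    evV hN a k (Polynomial.derivative W) = ∏ j ∈ Finset.univ.erase k, (a k - a j) := by
  have h := Lagrange.eval_nodal_derivative_eval_node_eq (v := a) (Finset.mem_univ k)
  rw [Lagrange.eval_nodal, Lagrange.nodal, ← H.prod] at h
  rw [evV_def, ← Polynomial.derivative_map, h]

theorem ev_deriv_ne (k : Fin n) : evV hN a k (Polynomial.derivative W) ≠ 0 := by
  rw [H.ev_deriv, Finset.prod_ne_zero_iff]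
  intro j hj
  rw [sub_ne_zero]
  exact fun h => (Finset.ne_of_mem_erase hj) (H.inj h).symm

/-- numerators -/
theorem nod (c : Fin n → V) (k : Fin n) :
    (∑ i, Polynomial.C (c i) * ∏ j ∈ Finset.univ.erase i, (Polynomial.X - Polynomial.C (a j))).eval
      (a k) = c k * evV hN a k (Polynomial.derivative W) := by
  rw [Polynomial.eval_finsetSum, Finset.sum_eq_single k]
  · rw [H.ev_deriv, Polynomial.eval_mul, Polynomial.eval_C, Polynomial.eval_prod]
    simp
  · intro i _ hi
    rw [Polynomial.eval_mul, Polynomial.eval_prod,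
      Finset.prod_eq_zero (Finset.mem_erase.2 ⟨hi.symm, Finset.mem_univ k⟩), mul_zero]
    simp
  · simp

theorem exists_cond : ∃ m : ℕ, ∀ c : Fin n → V, (∀ k, sg N (c k) = c (H.perm k)) →
    ∃ p : Polynomial V, ∀ k, evV hN a k p = evV hN a k (Polynomial.C PowerSeries.X ^ m) * c k := by
  have h1 : ∀ k, ∃ m : ℕ, evV hN a k (Polynomial.derivative W) ∣ PowerSeries.X ^ m := by
    intro k
    exact ⟨_, (assoc_X (H.ev_deriv_ne k)).dvd'⟩
  choose m hm using h1
  set M := ∑ k, m k with hM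
  have h2 : ∀ k, ∃ e, evV hN a k (Polynomial.C PowerSeries.X ^ M) =
      evV hN a k (Polynomial.derivative W) * e := by
    intro k
    rw [map_pow, evV_C, ex_X, ← pow_mul]
    refine (hm k).trans (pow_dvd_pow _ ?_)
    calc m k ≤ M := Finset.single_le_sum (f := m) (fun _ _ => Nat.zero_le _) (Finset.mem_univ k)
      _ ≤ N * M := Nat.le_mul_of_pos_left _ (Nat.pos_of_ne_zero hN)
  choose e he using h2
  refine ⟨M, fun c hc => ?_⟩
  have hse : ∀ k, sg N (e k) = e (H.perm k) := by
    intro k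
    have h3 := congrArg (sg N) (he k)
    rw [map_mul, H.sg_ev, H.sg_ev, he] at h3
    exact (mul_left_cancel₀ (H.ev_deriv_ne _) h3).symm
  obtain ⟨p, hp⟩ := lift_poly N hN (∑ i, Polynomial.C (e i * c i) *
    ∏ j ∈ Finset.univ.erase i, (Polynomial.X - Polynomial.C (a j))) (by
      rw [Polynomial.map_sum]
      refine Fintype.sum_equiv H.perm _ _ (fun i => ?_)
      rw [Polynomial.map_mul, Polynomial.map_C, map_mul, hse, hc, Polynomial.map_prod]
      congr 1
      refine Finset.prod_equiv H.perm ?_ ?_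
      · intro j; simp
      · intro j _
        simp [H.sg_a])
  refine ⟨p, fun k => ?_⟩
  rw [evV_def hN a k p, hp, H.nod, he]
  ring

end RD
end TJ

namespace TJ

/-- fraction field of `V` -/
abbrev E : Type := FractionRing V

theorem iota_inj : Function.Injective (algebraMap V E) := IsFractionRing.injective V E

theorem sg_surj (N : ℕ) (hN : N ≠ 0) : Function.Surjective (sg N) := by
  have h : (zt N)⁻¹ * (zt N) = 1 := inv_mul_cancel₀ ((zt_prim N hN).ne_zero hN)
  intro a
  refine ⟨PowerSeries.rescale (zt N)⁻¹ a, ?_⟩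
  rw [sg, PowerSeries.rescale_rescale, h, PowerSeries.rescale_one]
  rfl

theorem sg_smul (N : ℕ) (c : ℂ) (v : V) : sg N (c • v) = c • sg N v := by
  ext m
  simp only [sg, PowerSeries.coeff_rescale, map_smul, smul_eq_mul]
  ring

/-- extension of `sg` to fractions -/
noncomputable def sgE (N : ℕ) (hN : N ≠ 0) : E →+* E := IsFractionRing.map (sg_inj N hN)

theorem sgE_iota (N : ℕ) (hN : N ≠ 0) (v : V) :
    sgE N hN (algebraMap V E v) = algebraMap V E (sg N v) := by
  simp [sgE, IsFractionRing.map]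

/-- evaluation at all roots -/
noncomputable def evA {n N : ℕ} (hN : N ≠ 0) (a : Fin n → V) : Polynomial V →ₐ[ℂ] (Fin n → E) where
  toRingHom := RingHom.pi fun k => (algebraMap V E).comp (evV hN a k)
  commutes' := by
    intro c
    ext k
    show algebraMap V E (evV hN a k (algebraMap ℂ (Polynomial V) c)) = algebraMap ℂ E c
    rw [Polynomial.algebraMap_apply, evV_C]
    rw [show ex N hN (algebraMap ℂ V c) = algebraMap ℂ V c from
      (PowerSeries.expand (R := ℂ) N hN).commutes c, ← IsScalarTower.algebraMap_apply]

theorem evA_apply {n N : ℕ} (hN : N ≠ 0) (a : Fin n → V) (p : Polynomial V) (k : Fin n) :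
    evA hN a p k = algebraMap V E (evV hN a k p) := rfl

/-- multiplication by a tuple -/
noncomputable abbrev mulM {n : ℕ} (b : Fin n → E) : (Fin n → E) →ₗ[ℂ] (Fin n → E) :=
  LinearMap.mulLeft ℂ b

theorem mulM_inj {n : ℕ} {b : Fin n → E} (hb : ∀ k, b k ≠ 0) : Function.Injective (mulM b) := by
  intro c d h
  ext k
  have := congrFun h k
  simpa [hb k] using this

theorem mulM_inv {n : ℕ} {b : Fin n → E} (hb : ∀ k, b k ≠ 0) (T : Submodule ℂ (Fin n → E)) :
    (T.map (mulM b⁻¹)).map (mulM b) = T := by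
  rw [← Submodule.map_comp]
  have : mulM b ∘ₗ mulM b⁻¹ = LinearMap.id := by
    refine LinearMap.ext fun c => ?_
    ext k
    simp [hb k]
  rw [this, Submodule.map_id]

/-- length of `A[y]/(W,p)` -/
noncomputable def len (W p : Polynomial V) : ℕ∞ :=
  Module.length ℂ (Polynomial V ⧸ Ideal.span {W, p})

theorem len_X {W : Polynomial V} (hW : W.Monic) :
    len W (Polynomial.C PowerSeries.X) = W.natDegree := by
  let cc : V →ₐ[ℂ] ℂ := 
    { toRingHom := PowerSeries.constantCoeff (R := ℂ)
      commutes' := fun c => by simp }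
  let W0 := W.map (PowerSeries.constantCoeff (R := ℂ))
  let φ : Polynomial V →ₐ[ℂ] (Polynomial ℂ ⧸ Ideal.span {W0}) :=
    (Ideal.Quotient.mkₐ ℂ _).comp (Polynomial.mapAlgHom cc)
  have hφ : ∀ p, φ p = Ideal.Quotient.mk _ (p.map (PowerSeries.constantCoeff (R := ℂ))) :=
    fun p => rfl
  have hsurj : Function.Surjective φ := by
    intro q
    obtain ⟨q, rfl⟩ := Ideal.Quotient.mk_surjective q
    refine ⟨q.map (PowerSeries.C (R := ℂ)), ?_⟩
    rw [hφ, Polynomial.map_map, show (PowerSeries.constantCoeff (R := ℂ)).comp PowerSeries.C =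
      RingHom.id ℂ by ext; simp, Polynomial.map_id]
  have hdvd : ∀ p : Polynomial V, p.map (PowerSeries.constantCoeff (R := ℂ)) = 0 →
      Polynomial.C (PowerSeries.X : V) ∣ p := by
    intro p hp
    rw [Polynomial.C_dvd_iff_dvd_coeff]
    intro i
    rw [PowerSeries.X_dvd_iff, ← Polynomial.coeff_map, hp, Polynomial.coeff_zero]
  have hker : RingHom.ker φ = Ideal.span {W, Polynomial.C PowerSeries.X} := by
    apply le_antisymm
    · intro p hp
      rw [RingHom.mem_ker, hφ, Ideal.Quotient.eq_zero_iff_mem, Ideal.mem_span_singleton] at hp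
      obtain ⟨q, hq⟩ := hp
      have := hdvd (p - W * q.map (PowerSeries.C (R := ℂ))) (by
        rw [Polynomial.map_sub, Polynomial.map_mul, Polynomial.map_map,
          show (PowerSeries.constantCoeff (R := ℂ)).comp PowerSeries.C =
            RingHom.id ℂ by ext; simp, Polynomial.map_id, hq, sub_self])
      obtain ⟨s, hs⟩ := this
      rw [Ideal.mem_span_pair]
      refine ⟨q.map (PowerSeries.C (R := ℂ)), s, ?_⟩
      linear_combination -hs
    · rw [Ideal.span_le]
      rintro p (rfl | rfl)
      · rw [SetLike.mem_coe, RingHom.mem_ker, hφ, Ideal.Quotient.eq_zero_iff_mem]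
        exact Ideal.mem_span_singleton_self _
      · rw [SetLike.mem_coe, RingHom.mem_ker, hφ]
        simp
  have e1 := (Ideal.quotientKerAlgEquivOfSurjective hsurj).toLinearEquiv.length_eq
  have e2 := (Ideal.quotientEquivAlgOfEq ℂ hker).toLinearEquiv.length_eq
  rw [len, ← e2, e1]
  have hm : W0.Monic := hW.map _
  have : Module.Finite ℂ (Polynomial ℂ ⧸ Ideal.span {W0}) := hm.finite_quotient
  rw [Module.length_eq_finrank, finrank_quotient_span_eq_natDegree, hW.natDegree_map]

namespace RD
variable {W : Polynomial V} {n N : ℕ} {hN : N ≠ 0} {a : Fin n → V} (H : RD W n N hN a)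

/-- the curve ring -/
noncomputable def Rm (_ : RD W n N hN a) : Submodule ℂ (Fin n → E) :=
  LinearMap.range (evA hN a).toLinearMap

/-- the normalization -/
noncomputable def Om : Submodule ℂ (Fin n → E) where
  carrier := {c | ∃ v : Fin n → V, (∀ k, c k = algebraMap V E (v k)) ∧
    ∀ k, sg N (v k) = v (H.perm k)}
  zero_mem' := ⟨0, by simp, by simp⟩
  add_mem' := by
    rintro c d ⟨v, h1, h2⟩ ⟨w, h3, h4⟩
    exact ⟨v + w, fun k => by simp [h1, h3], fun k => by simp [h2, h4]⟩
  smul_mem' := by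
    rintro z c ⟨v, h1, h2⟩
    refine ⟨z • v, fun k => ?_, fun k => ?_⟩
    · rw [Pi.smul_apply, h1, Pi.smul_apply, Algebra.smul_def, Algebra.smul_def, map_mul,
        ← IsScalarTower.algebraMap_apply]
    · rw [Pi.smul_apply, Pi.smul_apply, sg_smul, h2]

theorem mem_Rm (c : Fin n → E) : c ∈ H.Rm ↔ ∃ p, evA hN a p = c := Iff.rfl

theorem mem_Om (c : Fin n → E) : c ∈ H.Om ↔ ∃ v : Fin n → V, (∀ k, c k = algebraMap V E (v k)) ∧
    ∀ k, sg N (v k) = v (H.perm k) := Iff.rfl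

theorem R_le_O : H.Rm ≤ H.Om := by
  rintro _ ⟨p, rfl⟩
  exact ⟨fun k => evV hN a k p, fun k => rfl, fun k => H.sg_ev k p⟩

theorem mul_O {c d : Fin n → E} (hc : c ∈ H.Om) (hd : d ∈ H.Om) : c * d ∈ H.Om := by
  obtain ⟨v, h1, h2⟩ := hc
  obtain ⟨w, h3, h4⟩ := hd
  exact ⟨v * w, fun k => by simp [h1, h3], fun k => by simp [h2, h4]⟩

theorem map_R_le (p : Polynomial V) : H.Rm.map (mulM (evA hN a p)) ≤ H.Rm := by
  rintro _ ⟨_, ⟨q, rfl⟩, rfl⟩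
  exact ⟨p * q, by simp⟩

theorem map_O_le (p : Polynomial V) : H.Om.map (mulM (evA hN a p)) ≤ H.Om := by
  rintro _ ⟨c, hc, rfl⟩
  exact H.mul_O (H.R_le_O ⟨p, rfl⟩) hc

theorem ker_evA (H : RD W n N hN a) (p : Polynomial V) : evA hN a p = 0 ↔ W ∣ p := by
  rw [← H.ev_eq_zero_iff, funext_iff]
  refine forall_congr' fun k => ?_
  rw [evA_apply, Pi.zero_apply, map_eq_zero_iff _ iota_inj]

theorem len_R (p : Polynomial V) : len W p = dl (H.Rm.map (mulM (evA hN a p))) H.Rm := by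
  let P : Submodule ℂ (Polynomial V) := (Ideal.span {W, p}).restrictScalars ℂ
  have hker : LinearMap.ker (evA hN a).toLinearMap ≤ P := by
    intro q hq
    rw [LinearMap.mem_ker] at hq
    have := (H.ker_evA q).1 hq
    exact Ideal.mem_of_dvd _ this (Ideal.subset_span (by simp))
  have e := dl_range (P := P) (evA hN a).toLinearMap hker
  have hmap : P.map (evA hN a).toLinearMap = H.Rm.map (mulM (evA hN a p)) := by
    apply le_antisymm
    · rintro _ ⟨q, hq, rfl⟩
      have hq' : q ∈ Ideal.span {W, p} := hq
      rw [Ideal.mem_span_pair] at hq'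
      obtain ⟨b, c, rfl⟩ := hq'
      refine ⟨evA hN a c, ⟨c, rfl⟩, ?_⟩
      have : evA hN a W = 0 := (H.ker_evA W).2 dvd_rfl
      simp [this, mul_comm]
    · rintro _ ⟨_, ⟨q, rfl⟩, rfl⟩
      refine ⟨p * q, ?_, by simp⟩
      exact Ideal.mul_mem_right _ _ (Ideal.subset_span (by simp))
  rw [hmap] at e
  exact e.symm

theorem x_ne (k : Fin n) : evA hN a (Polynomial.C PowerSeries.X) k ≠ 0 := by
  rw [evA_apply, evV_C, ex_X, Ne, map_eq_zero_iff _ iota_inj]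
  exact pow_ne_zero _ PowerSeries.X_ne_zero

theorem mulM_pow (b : Fin n → E) (m : ℕ) : mulM b ^ m = mulM (b ^ m) := by
  rw [mulM, mulM, LinearMap.pow_mulLeft]

theorem fin : dl H.Rm H.Om ≠ ⊤ := by
  obtain ⟨m, hm⟩ := H.exists_cond
  refine dl_fin (mulM (evA hN a (Polynomial.C PowerSeries.X))) (mulM_inj x_ne) (H.map_R_le _) ?_ m ?_
  · rw [← H.len_R, len_X H.monic]
    exact ENat.natCast_ne_top _
  · rw [mulM_pow]
    rintro _ ⟨c, ⟨v, h1, h2⟩, rfl⟩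
    obtain ⟨p, hp⟩ := hm v h2
    refine ⟨p, ?_⟩
    ext k
    show evA hN a p k = (evA hN a (Polynomial.C PowerSeries.X) ^ m * c) k
    rw [← map_pow, Pi.mul_apply, evA_apply, evA_apply, hp, map_mul, h1]

theorem len_O (p : Polynomial V) (hp : ∀ k, evV hN a k p ≠ 0) :
    len W p = dl (H.Om.map (mulM (evA hN a p))) H.Om := by
  rw [H.len_R]
  refine dl_scale H.R_le_O H.fin _ (mulM_inj fun k => ?_) (H.map_R_le p) (H.map_O_le p)
  rw [evA_apply, Ne, map_eq_zero_iff _ iota_inj]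
  exact hp k

theorem len_assoc (H : RD W n N hN a) (p q : Polynomial V) (hp : ∀ k, evV hN a k p ≠ 0)
    (hpq : ∀ k, Associated (evV hN a k p) (evV hN a k q)) : len W p = len W q := by
  have key : ∀ p q : Polynomial V, (∀ k, evV hN a k p ≠ 0) →
      (∀ k, Associated (evV hN a k p) (evV hN a k q)) → 
      H.Om.map (mulM (evA hN a q)) ≤ H.Om.map (mulM (evA hN a p)) := by
    intro p q hp hpq
    choose u hu using hpq
    rintro _ ⟨c, hc, rfl⟩
    refine ⟨(fun k => algebraMap V E (u k)) * c, H.mul_O ⟨fun k => u k, fun k => rfl, ?_⟩ hc, ?_⟩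
    · intro k
      have h1 := congrArg (sg N) (hu k)
      rw [map_mul, H.sg_ev, H.sg_ev, ← hu] at h1
      exact mul_left_cancel₀ (hp _) h1
    · ext k
      show evA hN a p k * (algebraMap V E (u k) * c k) = evA hN a q k * c k
      rw [evA_apply, evA_apply, ← hu, map_mul, mul_assoc]
  have hq : ∀ k, evV hN a k q ≠ 0 := fun k => (hpq k).ne_zero_iff.1 (hp k)
  rw [H.len_O p hp, H.len_O q hq, le_antisymm (key p q hp hpq)
    (key q p hq fun k => (hpq k).symm)]

end RD
end TJ

namespace TJ

/-- range of `V` in `E` as a complex subspace -/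
noncomputable def VE : Submodule ℂ E := LinearMap.range (IsScalarTower.toAlgHom ℂ V E).toLinearMap

theorem mem_VE (z : E) : z ∈ VE ↔ ∃ v, algebraMap V E v = z := Iff.rfl

theorem exists_lam (N : ℕ) (hN : N ≠ 0) : ∃ l : E →ₗ[ℂ] ℂ, (∀ v, l (algebraMap V E v) = 0) ∧
    l ((algebraMap V E (PowerSeries.X ^ N))⁻¹) ≠ 0 := by
  have hnot : (algebraMap V E (PowerSeries.X ^ N))⁻¹ ∉ VE := by
    rintro ⟨v, hv⟩
    change algebraMap V E v = _ at hv
    have h0 : algebraMap V E (PowerSeries.X ^ N) ≠ 0 := by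
      rw [Ne, map_eq_zero_iff _ iota_inj]; exact pow_ne_zero _ PowerSeries.X_ne_zero
    have h1 : algebraMap V E (v * PowerSeries.X ^ N) = algebraMap V E 1 := by
      rw [map_mul, hv, inv_mul_cancel₀ h0, map_one]
    have h2 := congrArg (PowerSeries.constantCoeff (R := ℂ)) (iota_inj h1)
    simp [hN] at h2
  obtain ⟨l, h1, h2⟩ := Submodule.exists_dual_map_eq_bot_of_notMem hnot inferInstance
  refine ⟨l, fun v => ?_, h1⟩
  have : l (algebraMap V E v) ∈ VE.map l := ⟨_, ⟨v, rfl⟩, rfl⟩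
  rw [h2] at this
  exact this

namespace RD
variable {W : Polynomial V} {n N : ℕ} {hN : N ≠ 0} {a : Fin n → V} 

theorem euler (H : RD W n N hN a) (h : Polynomial V) :
    ∃ v : V, ∑ k, algebraMap V E (evV hN a k h) /
      algebraMap V E (evV hN a k (Polynomial.derivative W)) = algebraMap V E v := by
  by_cases hn : n = 0
  · subst hn
    exact ⟨0, by simp⟩
  let g := h %ₘ W
  have hg : ∀ k, evV hN a k h = evV hN a k g := by
    intro k
    have h2 := congrArg (evV hN a k) (Polynomial.modByMonic_add_div h W)
    rw [map_add, map_mul, H.ev_W, zero_mul, add_zero] at h2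
    exact h2.symm
  let P : Polynomial E := (g.map (ex N hN)).map (algebraMap V E)
  have hdeg : P.degree < (Finset.univ : Finset (Fin n)).card := by
    rw [Finset.card_univ, Fintype.card_fin]
    refine lt_of_le_of_lt (Polynomial.degree_map_le.trans Polynomial.degree_map_le) ?_
    have := Polynomial.degree_modByMonic_lt h H.monic
    rwa [Polynomial.degree_eq_natDegree H.monic.ne_zero, H.natDegree] at this
  have hinj : Set.InjOn (fun k => algebraMap V E (a k)) (Finset.univ : Finset (Fin n)) :=
    fun i _ j _ hij => H.inj (iota_inj hij)
  have e := Lagrange.coeff_eq_sum hinj hdeg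
  rw [Polynomial.coeff_map] at e
  refine ⟨_, Eq.trans ?_ e.symm⟩
  refine Finset.sum_congr rfl fun k _ => ?_
  rw [H.ev_deriv, hg, map_prod, Polynomial.eval_map_apply, evV_def]
  simp

theorem main (H : RD W n N hN a) (hn : n ≠ 0) :
    len W (Polynomial.derivative W) + 1 ≤ dl H.Rm H.Om + dl H.Rm H.Om + n := by
  obtain ⟨l, hl0, hl1⟩ := exists_lam N hN
  let D : Fin n → E := evA hN a (Polynomial.derivative W)
  have hD : ∀ k, D k ≠ 0 := fun k => by
    show algebraMap V E (evV hN a k (Polynomial.derivative W)) ≠ 0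
    rw [Ne, map_eq_zero_iff _ iota_inj]; exact H.ev_deriv_ne k
  let x : Fin n → E := evA hN a (Polynomial.C PowerSeries.X)
  have hx : ∀ k, x k ≠ 0 := x_ne
  have hxk : ∀ k, x k = algebraMap V E (PowerSeries.X ^ N) := fun k => by
    show algebraMap V E (evV hN a k (Polynomial.C PowerSeries.X)) = _
    rw [evV_C, ex_X]
  let Λ : (Fin n → E) →ₗ[ℂ] ℂ := l ∘ₗ (∑ k, LinearMap.proj k)
  have hΛ : ∀ c, Λ c = ∑ k, l (c k) := fun c => by simp [Λ]
  let β : (Fin n → E) →ₗ[ℂ] (Fin n → E) →ₗ[ℂ] ℂ := (LinearMap.mul ℂ (Fin n → E)).compr₂ Λ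
  have hβ : ∀ c d, β c d = Λ (c * d) := fun c d => rfl
  have hΛO : ∀ c ∈ H.Om, Λ c = 0 := by
    rintro c ⟨v, h1, -⟩
    rw [hΛ]
    exact Finset.sum_eq_zero fun k _ => by rw [h1, hl0]
  let Q := H.Rm.map (mulM D⁻¹)
  have hQR : Q.map (mulM D) = H.Rm := mulM_inv hD _
  have hRQ : H.Rm ≤ Q := by
    intro c hc
    refine ⟨D * c, H.map_R_le _ ⟨c, hc, rfl⟩, ?_⟩
    ext k
    simp [hD k]
  have hi : len W (Polynomial.derivative W) = dl H.Rm Q := by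
    rw [H.len_R, ← dl_map (P := H.Rm) (T := Q) (mulM D) (mulM_inj hD), hQR]
  have hβQ : ∀ q ∈ Q, ∀ w ∈ H.Rm, β q w = 0 := by
    rintro _ ⟨_, ⟨p, rfl⟩, rfl⟩ _ ⟨r, rfl⟩
    rw [hβ, hΛ, ← map_sum]
    obtain ⟨v, hv⟩ := H.euler (p * r)
    rw [← hl0 v, ← hv]
    congr 1
    refine Finset.sum_congr rfl fun k _ => ?_
    show (D k)⁻¹ * algebraMap V E (evV hN a k p) * algebraMap V E (evV hN a k r) = _
    rw [map_mul, map_mul]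
    show _ = _ / D k
    ring
  let Q0 := Q ⊓ LinearMap.ker ((Module.Dual.transpose H.Om.subtype).comp β)
  have hQ0 : dl Q0 Q ≤ dl H.Rm H.Om := dl_dual H.fin β hβQ
  have hmem : ∀ q, q ∈ Q0 ↔ q ∈ Q ∧ ∀ w ∈ H.Om, β q w = 0 := by
    intro q
    rw [Submodule.mem_inf, LinearMap.mem_ker]
    refine and_congr_right fun _ => ?_
    rw [LinearMap.ext_iff]
    exact ⟨fun h w hw => h ⟨w, hw⟩, fun h w => h w w.2⟩
  let O' := H.Om.map (mulM x⁻¹)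
  let T := O' ⊓ LinearMap.ker Λ
  have hOT : H.Om ≤ T := by
    intro c hc
    refine ⟨⟨x * c, H.map_O_le _ ⟨c, hc, rfl⟩, ?_⟩, hΛO c hc⟩
    ext k
    simp [hx k]
  have h1O : (1 : Fin n → E) ∈ H.Om := H.R_le_O ⟨1, by simp⟩
  have hTO : T < O' := by
    refine lt_of_le_of_ne inf_le_left fun h => ?_
    have h1 : x⁻¹ * 1 ∈ O' := ⟨1, h1O, rfl⟩
    rw [← h] at h1
    have h2 : Λ (x⁻¹ * 1) = 0 := h1.2
    rw [hΛ] at h2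
    simp only [mul_one, Pi.inv_apply, hxk, Finset.sum_const, Finset.card_univ, Fintype.card_fin,
      nsmul_eq_mul, mul_eq_zero, Nat.cast_eq_zero] at h2
    exact h2.elim hn hl1
  have hO'n : dl H.Om O' = n := by
    rw [← dl_map (P := H.Om) (T := O') (mulM x) (mulM_inj hx), mulM_inv hx, ← H.len_O,
      len_X H.monic, H.natDegree]
    intro k
    rw [evV_C, ex_X]
    exact pow_ne_zero _ PowerSeries.X_ne_zero
  have hOTn : dl H.Om T + 1 ≤ n := hO'n ▸ dl_lt hOT hTO
  have hRQ0 : H.Rm ≤ Q0 := by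
    intro c hc
    rw [hmem]
    refine ⟨hRQ hc, fun w hw => hΛO _ (H.mul_O (H.R_le_O hc) hw)⟩
  have hQ0T : Q0 ≤ T := by
    intro q hq
    rw [hmem] at hq
    obtain ⟨⟨_, ⟨r, rfl⟩, hr⟩, hq⟩ := hq
    have hqD : ∀ k, q k * D k = algebraMap V E (evV hN a k r) := by
      intro k
      rw [← hr]
      show (D k)⁻¹ * algebraMap V E (evV hN a k r) * D k = _
      field_simp [hD k]
    let b : Fin n → E := x * q
    have hbσ : ∀ k, sgE N hN (b k) = b (H.perm k) := by
      intro k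
      have hb : ∀ j, b j * D j = algebraMap V E (evV hN a j (Polynomial.C PowerSeries.X * r)) := by
        intro j
        rw [map_mul, map_mul, ← hqD]
        show x j * q j * D j = x j * (q j * D j)
        ring
      have h1 := congrArg (sgE N hN) (hb k)
      rw [map_mul, sgE_iota, H.sg_ev, ← hb,
        show sgE N hN (D k) = D (H.perm k) from (sgE_iota N hN _).trans
          (congrArg _ (H.sg_ev k _))] at h1
      exact mul_right_cancel₀ (hD _) h1
    let S : Fin n → Prop := fun k => ¬ ∃ v, algebraMap V E v = b k
    have hS : ∀ k, S k ↔ S (H.perm k) := by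
      intro k
      refine not_congr ⟨?_, ?_⟩
      · rintro ⟨v, hv⟩
        exact ⟨sg N v, by rw [← sgE_iota N hN, hv, hbσ]⟩
      · rintro ⟨v, hv⟩
        obtain ⟨v, rfl⟩ := sg_surj N hN v
        refine ⟨v, (sgE N hN).injective ?_⟩
        rw [sgE_iota, hv, hbσ]
    have hinv : ∀ k, ∃ w : V, S k → algebraMap V E w = (b k)⁻¹ := by
      intro k
      rcases ValuationRing.isInteger_or_isInteger V (b k) with h | ⟨w, hw⟩
      · exact ⟨0, fun hk => (hk h).elim⟩
      · exact ⟨w, fun _ => hw⟩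
    choose w0 hw0 using hinv
    classical
    let w : Fin n → V := fun k => if S k then w0 k else 0
    have hwσ : ∀ k, sg N (w k) = w (H.perm k) := by
      intro k
      by_cases hk : S k
      · have hk' := (hS k).1 hk
        simp only [w, hk, hk', if_true]
        apply iota_inj
        rw [← sgE_iota N hN, hw0 k hk, hw0 _ hk', map_inv₀, hbσ]
      · have hk' : ¬ S (H.perm k) := fun h => hk ((hS k).2 h)
        simp only [w, hk, hk', if_false, map_zero]
    have hempty : ∀ k, ¬ S k := by
      have h1 := hq (fun k => algebraMap V E (w k)) ⟨w, fun k => rfl, hwσ⟩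
      rw [hβ, hΛ] at h1
      have h2 : ∀ k, l ((q * fun k => algebraMap V E (w k)) k) =
          if S k then l ((algebraMap V E (PowerSeries.X ^ N))⁻¹) else 0 := by
        intro k
        by_cases hk : S k
        · simp only [Pi.mul_apply, w, hk, if_true]
          rw [hw0 k hk, ← hxk k]
          congr 1
          have hb0 : b k ≠ 0 := fun h => hk ⟨0, by rw [h, map_zero]⟩
          have hq0 : q k ≠ 0 := fun h => hb0 (by show x k * q k = 0; rw [h, mul_zero])
          show q k * (x k * q k)⁻¹ = _
          rw [mul_inv, mul_left_comm, mul_inv_cancel₀ hq0, mul_one]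
        · simp only [Pi.mul_apply, w, hk, if_false, map_zero, mul_zero]
      rw [Finset.sum_congr rfl fun k _ => h2 k, ← Finset.sum_filter, Finset.sum_const,
        nsmul_eq_mul, mul_eq_zero, Nat.cast_eq_zero, Finset.card_eq_zero] at h1
      have h3 := h1.resolve_right hl1
      intro k hk
      have : k ∈ (Finset.univ.filter S) := by simp [hk]
      rw [h3] at this
      simp at this
    refine ⟨⟨b, ?_, ?_⟩, ?_⟩
    · have : ∀ k, ∃ v, algebraMap V E v = b k := fun k => not_not.1 (hempty k)
      choose v hv using this
      refine ⟨v, fun k => (hv k).symm, fun k => iota_inj ?_⟩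
      rw [← sgE_iota N hN, hv, hv, hbσ]
    · ext k
      show (x k)⁻¹ * (x k * q k) = q k
      rw [inv_mul_cancel_left₀ (hx k)]
    · have h1 := hq 1 h1O
      rw [hβ, mul_one] at h1
      exact h1
  have e1 : dl H.Rm Q = dl H.Rm Q0 + dl Q0 Q := dl_add hRQ0 inf_le_left
  have e2 : dl H.Rm T = dl H.Rm H.Om + dl H.Om T := dl_add H.R_le_O hOT
  calc len W (Polynomial.derivative W) + 1 = dl H.Rm Q0 + dl Q0 Q + 1 := by rw [hi, e1]
    _ ≤ dl H.Rm T + dl H.Rm H.Om + 1 := by gcongr; exact dl_mono hQ0T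
    _ = dl H.Rm H.Om + dl H.Rm H.Om + (dl H.Om T + 1) := by rw [e2]; ring
    _ ≤ _ := by gcongr

end RD
end TJ

namespace TJ
namespace RD
variable {W : Polynomial V} {n N : ℕ} {hN : N ≠ 0} {a : Fin n → V} 

theorem delta_eq (H : RD W n N hN a) {R0 : Type} [CommRing R0] [Algebra ℂ R0]
    (ψ : Polynomial V →ₐ[ℂ] R0) (hs : Function.Surjective ψ) (hk : ∀ p, ψ p = 0 ↔ W ∣ p)
    (K : Type) [CommRing K] [Algebra R0 K] [IsFractionRing R0 K] [Algebra ℂ K]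
    [IsScalarTower ℂ R0 K] :
    Module.length ℂ ((integralClosure R0 K) ⧸
      LinearMap.range (Algebra.linearMap R0 (integralClosure R0 K))) = dl H.Rm H.Om := by
  have hker : RingHom.ker (ψ : Polynomial V →+* R0) ≤
      RingHom.ker (evA hN a : Polynomial V →+* (Fin n → E)) := by
    intro p hp
    rw [RingHom.mem_ker] at hp ⊢
    exact (H.ker_evA p).2 ((hk p).1 hp)
  let e : R0 →+* (Fin n → E) := RingHom.liftOfSurjective (ψ : Polynomial V →+* R0) hs ⟨_, hker⟩
  have he : ∀ p, e (ψ p) = evA hN a p := fun p =>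
    RingHom.liftOfRightInverse_comp_apply _ _ _ ⟨_, hker⟩ p
  have hinj : Function.Injective e := by
    rw [injective_iff_map_eq_zero]
    intro r hr
    obtain ⟨p, rfl⟩ := hs r
    rw [he] at hr
    exact (hk p).2 ((H.ker_evA p).1 hr)
  obtain ⟨m, hm⟩ := H.exists_cond
  let x : R0 := ψ (Polynomial.C PowerSeries.X ^ m)
  have hex : ∀ k, e x k ≠ 0 := by
    intro k
    rw [he, map_pow]
    exact pow_ne_zero _ (x_ne k)
  have hcond : ∀ c ∈ H.Om, ∃ r, e r = e x * c := by
    rintro c ⟨v, h1, h2⟩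
    obtain ⟨p, hp⟩ := hm v h2
    refine ⟨ψ p, ?_⟩
    ext k
    rw [he, he, Pi.mul_apply, evA_apply, evA_apply, hp, h1, map_mul]
  -- nonzerodivisors have nonzero components
  have hnzd : ∀ s ∈ nonZeroDivisors R0, ∀ k, e s k ≠ 0 := by
    intro s hsz k hk0
    classical
    let v : Fin n → V := fun j => if e s j = 0 then 1 else 0
    have hiff : ∀ j, e s j = 0 ↔ e s (H.perm j) = 0 := by
      intro j
      obtain ⟨p, rfl⟩ := hs s
      rw [he, evA_apply, evA_apply, map_eq_zero_iff _ iota_inj, map_eq_zero_iff _ iota_inj,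
        ← H.sg_ev, map_eq_zero_iff _ (sg_inj N hN)]
    obtain ⟨r, hr⟩ := hcond (fun j => algebraMap V E (v j)) ⟨v, fun j => rfl, fun j => by
      simp only [v]
      rw [apply_ite (sg N), map_one, map_zero]
      simp only [hiff j]⟩
    have hr0 : r * s = 0 := by
      apply hinj
      rw [map_mul, hr, map_zero]
      ext j
      by_cases hj : e s j = 0
      · simp [hj]
      · simp [v, hj]
    have hr1 : r = 0 := (mem_nonZeroDivisors_iff_right.1 hsz) r hr0
    have := congrFun hr k
    rw [hr1, map_zero, Pi.mul_apply] at this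
    simp only [v, hk0, if_true, map_one, mul_one, Pi.zero_apply] at this
    exact hex k this.symm
  have hunit : ∀ s : nonZeroDivisors R0, IsUnit (e s) := by
    intro s
    rw [Pi.isUnit_iff]
    intro k
    exact isUnit_iff_ne_zero.2 (hnzd s s.2 k)
  have hxz : x ∈ nonZeroDivisors R0 := by
    rw [mem_nonZeroDivisors_iff_right]
    intro z hz
    apply hinj
    rw [map_zero]
    ext k
    have := congrFun (congrArg e hz) k
    rw [map_mul, map_zero, Pi.mul_apply] at this
    exact (mul_eq_zero.1 this).resolve_right (hex k)
  let eK : K →+* (Fin n → E) := IsLocalization.lift (M := nonZeroDivisors R0) hunit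
  have heK : ∀ r, eK (algebraMap R0 K r) = e r := fun r => IsLocalization.lift_eq hunit r
  have heKinj : Function.Injective eK := by
    rw [injective_iff_map_eq_zero]
    intro z hz
    obtain ⟨⟨r, s⟩, hrs⟩ := IsLocalization.surj (nonZeroDivisors R0) z
    have h1 := congrArg eK hrs
    rw [map_mul, hz, zero_mul, heK] at h1
    have h2 : r = 0 := hinj (by rw [← h1, map_zero])
    simp only [h2, map_zero] at hrs
    exact (IsUnit.mul_left_eq_zero (IsLocalization.map_units K s)).1 hrs
  have hes : ∀ (z : ℂ), e (algebraMap ℂ R0 z) = algebraMap ℂ (Fin n → E) z := by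
    intro z
    rw [← ψ.commutes, he, AlgHom.commutes]
  let F : integralClosure R0 K →ₗ[ℂ] (Fin n → E) :=
    { toFun := fun c => eK c
      map_add' := fun c d => by simp
      map_smul' := fun z c => by
        have : ((z • c : integralClosure R0 K) : K) = algebraMap R0 K (algebraMap ℂ R0 z) * c := by
          rw [← IsScalarTower.algebraMap_apply, ← Algebra.smul_def]; rfl
        rw [this, map_mul, heK, hes, RingHom.id_apply, Algebra.smul_def] }
  have hF : ∀ c, F c = eK c := fun c => rfl
  have hFinj : Function.Injective F := fun c d h => Subtype.ext (heKinj h)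
  have hrange : LinearMap.range F = H.Om := by
    apply le_antisymm
    · rintro _ ⟨c, rfl⟩
      rw [hF]
      have hint : ∀ k, IsIntegral V (eK c k) := by
        intro k
        have h1 : IsIntegral R0 (c : K) := c.2
        obtain ⟨q, hqm, hq⟩ := h1
        have hkerk : RingHom.ker (ψ : Polynomial V →+* R0) ≤ RingHom.ker (evV hN a k) := by
          intro p hp
          rw [RingHom.mem_ker] at hp ⊢
          exact (H.ev_eq_zero_iff p).2 ((hk p).1 hp) k
        let θ : R0 →+* V := RingHom.liftOfSurjective (ψ : Polynomial V →+* R0) hs ⟨_, hkerk⟩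
        have hθ : ∀ p, θ (ψ p) = evV hN a k p := fun p =>
          RingHom.liftOfRightInverse_comp_apply _ _ _ ⟨_, hkerk⟩ p
        refine ⟨q.map θ, hqm.map θ, ?_⟩
        have h3 := congrArg (fun c => Pi.evalRingHom (fun _ : Fin n => E) k (eK c)) hq
        simp only [Polynomial.hom_eval₂, map_zero] at h3
        rw [Polynomial.eval₂_map]
        refine Eq.trans ?_ h3
        congr 1
        ext1 r
        obtain ⟨p, rfl⟩ := hs r
        show algebraMap V E (θ (ψ p)) = eK (algebraMap R0 K (ψ p)) k
        rw [hθ, heK, he, evA_apply]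
      have h2 : ∀ k, ∃ v, algebraMap V E v = eK c k := fun k =>
        IsIntegrallyClosed.isIntegral_iff.1 (hint k)
      choose v hv using h2
      refine ⟨v, fun k => (hv k).symm, fun k => iota_inj ?_⟩
      obtain ⟨⟨r, s⟩, hrs⟩ := IsLocalization.surj (nonZeroDivisors R0) (c : K)
      have h3 : ∀ j, eK c j * e s j = e r j := by
        intro j
        have := congrFun (congrArg eK hrs) j
        rwa [map_mul, heK, heK] at this
      have h4 : ∀ r j, sgE N hN (e r j) = e r (H.perm j) := by
        intro r j
        obtain ⟨p, rfl⟩ := hs r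
        rw [he, evA_apply, evA_apply, sgE_iota, H.sg_ev]
      have h5 := congrArg (sgE N hN) (h3 k)
      rw [map_mul, h4, h4, ← h3] at h5
      have h6 := mul_right_cancel₀ (hnzd s s.2 _) h5
      rw [← sgE_iota N hN, hv, hv, h6]
    · intro c hc
      obtain ⟨r, hr⟩ := hcond c hc
      obtain ⟨v, h1, h2⟩ := hc
      let z : K := IsLocalization.mk' K r (⟨x, hxz⟩ : nonZeroDivisors R0)
      have hz : eK z = c := by
        have h3 : z * algebraMap R0 K x = algebraMap R0 K r :=
          IsLocalization.mk'_spec K r (⟨x, hxz⟩ : nonZeroDivisors R0)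
        have h4 := congrArg eK h3
        rw [map_mul, heK, heK, hr] at h4
        ext k
        have h5 := congrFun h4 k
        rw [Pi.mul_apply, Pi.mul_apply, mul_comm] at h5
        exact mul_left_cancel₀ (hex k) h5
      have hzint : IsIntegral R0 z := by
        obtain ⟨q, hq⟩ := lift_poly N hN (∏ k, (Polynomial.X - Polynomial.C (v k))) (by
          rw [Polynomial.map_prod]
          refine Fintype.prod_equiv H.perm _ _ fun k => ?_
          simp [h2])
        let τ : V →+* R0 := (ψ : Polynomial V →+* R0).comp Polynomial.C
        refine ⟨q.map τ, ?_, ?_⟩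
        · refine Polynomial.Monic.map _ (Polynomial.monic_of_injective (ex_inj N hN) ?_)
          rw [hq]
          exact Polynomial.monic_prod_X_sub_C _ _
        · apply heKinj
          rw [map_zero, Polynomial.hom_eval₂, Polynomial.eval₂_map, hz]
          ext k
          rw [Pi.zero_apply]
          have h3 := Polynomial.hom_eval₂ q ((eK.comp (algebraMap R0 K)).comp τ)
            (Pi.evalRingHom (fun _ : Fin n => E) k) c
          refine Eq.trans h3 ?_
          have h4 : (Pi.evalRingHom (fun _ : Fin n => E) k).comp
              ((eK.comp (algebraMap R0 K)).comp τ) = (algebraMap V E).comp (ex N hN) := by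
            ext1 w
            show eK (algebraMap R0 K (ψ (Polynomial.C w))) k = _
            rw [heK, he, evA_apply, evV_C]
            rfl
          have h5 : Pi.evalRingHom (fun _ : Fin n => E) k c = algebraMap V E (v k) := h1 k
          rw [h4, h5, ← Polynomial.hom_eval₂, ← Polynomial.eval_map, hq, Polynomial.eval_prod,
            Finset.prod_eq_zero (Finset.mem_univ k) (by simp), map_zero]
      exact ⟨⟨z, hzint⟩, hz⟩
  let P : Submodule ℂ (integralClosure R0 K) :=
    (LinearMap.range (Algebra.linearMap R0 (integralClosure R0 K))).restrictScalars ℂ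
  have hP : P.map F = H.Rm := by
    apply le_antisymm
    · rintro _ ⟨_, ⟨r, rfl⟩, rfl⟩
      obtain ⟨p, rfl⟩ := hs r
      exact ⟨p, ((heK _).trans (he p)).symm⟩
    · rintro _ ⟨p, rfl⟩
      exact ⟨algebraMap R0 (integralClosure R0 K) (ψ p), ⟨ψ p, rfl⟩, (heK _).trans (he p)⟩
  have := dl_range (P := P) F (by rw [LinearMap.ker_eq_bot.2 hFinj]; exact bot_le)
  rw [hP, hrange] at this
  rw [this]
  exact (Submodule.Quotient.restrictScalarsEquiv ℂ
    (LinearMap.range (Algebra.linearMap R0 (integralClosure R0 K)))).length_eq.symm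

end RD
end TJ

namespace TJ

theorem exists_RD {W : Polynomial V} (hW : W.Monic)
    (hs : (W.map (algebraMap V E)).Separable) :
    ∃ (N : ℕ) (hN : N ≠ 0) (a : Fin W.natDegree → V), RD W W.natDegree N hN a := by
  obtain ⟨N, hN, h⟩ := puiseux _ W hW rfl
  have h1 := h.eq_prod_roots_of_monic (hW.map _)
  have h2 : (W.map (ex N hN)).roots.card = W.natDegree := by
    rw [← h.natDegree_eq_card_roots, hW.natDegree_map]
  obtain ⟨l, hl⟩ := Quot.exists_rep (W.map (ex N hN)).roots
  replace hl : (l : Multiset V) = (W.map (ex N hN)).roots := hl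
  have h3 : l.length = W.natDegree := by
    rw [← h2, ← hl]; rfl
  have h4 : ∃ a : Fin W.natDegree → V, List.ofFn a = l := by
    rw [← h3]; exact ⟨l.get, List.ofFn_get l⟩
  obtain ⟨a, ha⟩ := h4
  have hp : W.map (ex N hN) = ∏ k, (Polynomial.X - Polynomial.C (a k)) := by
    rw [h1, ← hl, ← ha, Multiset.map_coe, Multiset.prod_coe, List.map_ofFn, List.prod_ofFn]
    rfl
  refine ⟨N, hN, a, ?_, hp⟩
  let exE : E →+* E := IsFractionRing.map (ex_inj N hN)
  have h5 : (exE.comp (algebraMap V E)) = (algebraMap V E).comp (ex N hN) := by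
    ext v
    simp [exE, IsFractionRing.map]
  have h6 := hs.map (f := exE)
  rw [Polynomial.map_map, h5, ← Polynomial.map_map, hp, Polynomial.map_prod] at h6
  simp only [Polynomial.map_sub, Polynomial.map_X, Polynomial.map_C] at h6
  have h7 := Polynomial.separable_prod_X_sub_C_iff.1 h6
  exact fun i j hij => h7 (congrArg _ hij)

instance : CharZero E := by
  have : CharZero V := charZero_of_injective_algebraMap (R := ℂ) (algebraMap ℂ V).injective
  exact charZero_of_injective_algebraMap iota_inj

theorem sep_of_irr {L : Polynomial V} (hL : L.Monic) (hi : Irreducible L) :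
    (L.map (algebraMap V E)).Separable :=
  ((hL.irreducible_iff_irreducible_map_fraction_map (K := E)).1 hi).separable

theorem sep_prod {r : ℕ} (w : Fin r → Polynomial V) (hm : ∀ i, (w i).Monic)
    (hi : ∀ i, Irreducible (w i)) (hne : ∀ i j, i ≠ j → w i ≠ w j) :
    ((∏ i, w i).map (algebraMap V E)).Separable := by
  rw [Polynomial.map_prod]
  refine Polynomial.separable_prod ?_ (fun i => sep_of_irr (hm i) (hi i))
  intro i j hij
  have h1 := (((hm i).irreducible_iff_irreducible_map_fraction_map (K := E)).1 (hi i))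
  have h2 := (((hm j).irreducible_iff_irreducible_map_fraction_map (K := E)).1 (hi j))
  refine h1.coprime_iff_not_dvd.2 ?_
  intro hd
  have h3 := Polynomial.eq_of_monic_of_associated ((hm i).map _) ((hm j).map _)
    (h1.associated_of_dvd h2 hd)
  exact hne i j hij (Polynomial.map_injective _ iota_inj h3)

theorem cc_ex (N : ℕ) (hN : N ≠ 0) (v : V) :
    PowerSeries.constantCoeff (ex N hN v) = PowerSeries.constantCoeff v := by
  simp [ex]

theorem cc_ev {n N : ℕ} (hN : N ≠ 0) (a : Fin n → V) (k : Fin n) (p : Polynomial V) :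
    PowerSeries.constantCoeff (evV hN a k p) =
      (p.map (PowerSeries.constantCoeff (R := ℂ))).eval (PowerSeries.constantCoeff (a k)) := by
  rw [evV_def, ← Polynomial.eval_map_apply, Polynomial.map_map]
  congr 2
  ext v
  exact cc_ex N hN v

theorem cc_a {n N : ℕ} (hN : N ≠ 0) (a : Fin n → V) (k : Fin n) {G : Polynomial V}
    (hG : G.IsDistinguishedAt (IsLocalRing.maximalIdeal V)) (h : evV hN a k G = 0) :
    PowerSeries.constantCoeff (a k) = 0 := by
  have h1 := cc_ev hN a k G
  rw [h, dist_map hG] at h1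
  simp only [map_zero, Polynomial.eval_pow, Polynomial.eval_X] at h1
  exact eq_zero_of_pow_eq_zero h1.symm

/-- y = X 0 is the outer variable and x = X 1 is the base variable -/
noncomputable def Ph : MvPolynomial (Fin 2) ℂ →ₐ[ℂ] Polynomial V :=
  MvPolynomial.aeval ![Polynomial.X, Polynomial.C PowerSeries.X]

theorem Ph_0 : Ph (X 0) = Polynomial.X := by simp [Ph]
theorem Ph_1 : Ph (X 1) = Polynomial.C PowerSeries.X := by simp [Ph]
theorem Ph_C (c : ℂ) : Ph (C c) = Polynomial.C (PowerSeries.C c) := by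
  simp [Ph]

theorem Ph_deriv (f : MvPolynomial (Fin 2) ℂ) :
    Ph (pderiv 0 f) = Polynomial.derivative (Ph f) := by
  induction f using MvPolynomial.induction_on with
  | C c => simp [Ph_C]
  | add p q hp hq => simp [hp, hq]
  | mul_X p i hp =>
    fin_cases i
    · simp [hp, Ph_0]; ring
    · simp [hp, Ph_1]; ring

theorem chain {n N : ℕ} (hN : N ≠ 0) (a : Fin n → V) (k : Fin n) (f : MvPolynomial (Fin 2) ℂ) :
    PowerSeries.derivative ℂ (evV hN a k (Ph f)) =
      evV hN a k (Ph (pderiv 0 f)) * PowerSeries.derivative ℂ (a k) +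
      evV hN a k (Ph (pderiv 1 f)) * ((N : V) * PowerSeries.X ^ (N - 1)) := by
  have hX : evV hN a k Polynomial.X = a k := by simp [evV]
  induction f using MvPolynomial.induction_on with
  | C c => 
    have : ex N hN (PowerSeries.C c) = PowerSeries.C c :=
      (PowerSeries.expand N hN).commutes c
    simp only [Ph_C, evV_C, pderiv_C, map_zero, zero_mul, add_zero, this]
    simp
  | add p q hp hq => 
    simp only [map_add, hp, hq]; ring
  | mul_X p i hp =>
    fin_cases i
    · simp [hp, Ph_0, hX, Derivation.leibniz]; ring
    · simp [hp, Ph_1, evV_C, ex_X, Derivation.leibniz, Derivation.leibniz_pow]; ring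

theorem assoc_X_deriv {p : V} (h0 : p ≠ 0) (hc : PowerSeries.constantCoeff p = 0) :
    Associated p (PowerSeries.X * PowerSeries.derivative ℂ p) := by
  obtain ⟨u, hu⟩ := assoc_X h0
  set m := p.order.toNat
  have hm : m ≠ 0 := by
    intro hm
    rw [hm, pow_zero, one_mul] at hu
    have := u.isUnit
    rw [hu, PowerSeries.isUnit_iff_constantCoeff, hc] at this
    simp at this
  have h1 : PowerSeries.X * PowerSeries.derivative ℂ p =
      PowerSeries.X ^ m * ((m : V) * (u : V) + PowerSeries.X * PowerSeries.derivative ℂ (u : V)) := by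
    rw [← hu]
    obtain ⟨m', hm'⟩ := Nat.exists_eq_succ_of_ne_zero hm
    rw [hm']
    simp [Derivation.leibniz, Derivation.leibniz_pow]
    ring
  have h2 : IsUnit ((m : V) * (u : V) + PowerSeries.X * PowerSeries.derivative ℂ (u : V)) := by
    rw [PowerSeries.isUnit_iff_constantCoeff]
    have h3 : (PowerSeries.constantCoeff (m : V) : ℂ) = m := map_natCast _ _
    have h4 := u.isUnit.map (PowerSeries.constantCoeff (R := ℂ))
    simp only [map_add, map_mul, PowerSeries.constantCoeff_X, zero_mul, add_zero, h3]
    exact IsUnit.mul (by simpa using hm) h4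
  rw [h1]
  exact (Associated.symm ⟨u, hu⟩).trans ⟨h2.unit, rfl⟩

end TJ

namespace TJ

theorem len_comm (p q : Polynomial V) : len p q = len q p := by
  rw [len, len, Set.pair_comm]

theorem len_mul {p q h : Polynomial V} (hp0 : p ≠ 0) (hp : ∀ α, p ∣ α * h → p ∣ α) :
    len (p * q) h = len p h + len q h := by
  have hle : Ideal.span {p * q, h} ≤ Ideal.span {p, h} := by
    rw [Ideal.span_le]
    rintro x (rfl | rfl)
    · exact Ideal.mul_mem_right _ _ (Ideal.subset_span (by simp))
    · exact Ideal.subset_span (by simp)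
  have hle2 : Ideal.span {q, h} ≤ Submodule.comap (LinearMap.mulLeft (Polynomial V) p)
      (Ideal.span {p * q, h}) := by
    refine Submodule.span_le.2 ?_
    rintro x (rfl | rfl)
    · exact Ideal.subset_span (by simp)
    · exact Ideal.mul_mem_left _ _ (Ideal.subset_span (by simp))
  let i : (Polynomial V ⧸ Ideal.span {q, h}) →ₗ[Polynomial V] (Polynomial V ⧸ Ideal.span {p * q, h}) :=
    Submodule.mapQ _ _ (LinearMap.mulLeft (Polynomial V) p) hle2
  have hi : ∀ x, i (Ideal.Quotient.mk _ x) = Ideal.Quotient.mk _ (p * x) := fun x => rfl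
  let s : (Polynomial V ⧸ Ideal.span {p * q, h}) →ₗ[Polynomial V] (Polynomial V ⧸ Ideal.span {p, h}) :=
    Submodule.factor hle
  have hs : ∀ x, s (Ideal.Quotient.mk _ x) = Ideal.Quotient.mk _ x := fun x => rfl
  rw [len, len, len, add_comm]
  refine Module.length_eq_add_of_exact (i.restrictScalars ℂ) (s.restrictScalars ℂ) ?_ ?_ ?_
  · intro x y hxy
    obtain ⟨x, rfl⟩ := Ideal.Quotient.mk_surjective x
    obtain ⟨y, rfl⟩ := Ideal.Quotient.mk_surjective y
    simp only [LinearMap.coe_restrictScalars, hi] at hxy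
    rw [Ideal.Quotient.eq, ← mul_sub, Ideal.mem_span_pair] at hxy
    obtain ⟨α, β, h1⟩ := hxy
    obtain ⟨γ, rfl⟩ := hp β ⟨(x - y) - α * q, by linear_combination h1⟩
    rw [Ideal.Quotient.eq, Ideal.mem_span_pair]
    refine ⟨α, γ, mul_left_cancel₀ hp0 ?_⟩
    linear_combination h1
  · intro y
    obtain ⟨y, rfl⟩ := Ideal.Quotient.mk_surjective y
    exact ⟨Ideal.Quotient.mk _ y, hs y⟩
  · intro y
    obtain ⟨y, rfl⟩ := Ideal.Quotient.mk_surjective y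
    simp only [LinearMap.coe_restrictScalars, hs]
    rw [Ideal.Quotient.eq_zero_iff_mem, Ideal.mem_span_pair]
    constructor
    · rintro ⟨α, β, rfl⟩
      refine ⟨Ideal.Quotient.mk _ α, ?_⟩
      simp only [LinearMap.coe_restrictScalars, hi]
      rw [Ideal.Quotient.eq, Ideal.mem_span_pair]
      exact ⟨0, -β, by ring⟩
    · rintro ⟨x, hx⟩
      obtain ⟨x, rfl⟩ := Ideal.Quotient.mk_surjective x
      simp only [LinearMap.coe_restrictScalars, hi] at hx
      rw [Ideal.Quotient.eq, Ideal.mem_span_pair] at hx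
      obtain ⟨α, β, h1⟩ := hx
      exact ⟨x - α * q, -β, by linear_combination -h1⟩

theorem len_CX {G : Polynomial V} (hG : G.Monic) (h : Polynomial V) :
    len G (Polynomial.C PowerSeries.X * h) = G.natDegree + len G h := by
  have hp : Prime (Polynomial.C (PowerSeries.X : V)) := Polynomial.prime_C_iff.2 PowerSeries.X_prime
  rw [len_comm, len_mul hp.ne_zero, len_comm, len_X hG, len_comm h]
  intro α hα
  refine (hp.dvd_or_dvd hα).resolve_right ?_
  rw [Polynomial.C_dvd_iff_dvd_coeff]
  intro h1
  have := h1 G.natDegree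
  rw [hG.coeff_natDegree] at this
  exact PowerSeries.X_prime.not_dvd_one this

theorem len_ind (h1 h2 : Polynomial V) (d : ℕ) : ∀ G : Polynomial V, G.Monic → G.natDegree = d →
    (∀ L : Polynomial V, L.Monic → Irreducible L → L ∣ G → ¬ L ∣ h1 ∧ ¬ L ∣ h2 ∧ len L h1 = len L h2) →
    len G h1 = len G h2 := by
  induction d using Nat.strong_induction_on with
  | _ d ih =>
  intro G hG hd H
  by_cases hu : IsUnit G
  · have : ∀ h, len G h = 0 := by
      intro h
      rw [len, Module.length_eq_zero_iff, Ideal.Quotient.subsingleton_iff]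
      exact Ideal.eq_top_of_isUnit_mem _ (Ideal.subset_span (by simp)) hu
    rw [this, this]
  · obtain ⟨L0, hL0, q0, hq0⟩ := WfDvdMonoid.exists_irreducible_factor hu hG.ne_zero
    have hlc : L0.leadingCoeff * q0.leadingCoeff = 1 := by
      rw [← Polynomial.leadingCoeff_mul, ← hq0]; exact hG
    let c : V := q0.leadingCoeff
    have hc : IsUnit c := IsUnit.of_mul_eq_one_right _ hlc
    have hC : IsUnit (Polynomial.C c) := Polynomial.isUnit_C.2 hc
    let L := L0 * Polynomial.C c
    have hL : L.Monic := by
      rw [Polynomial.Monic, Polynomial.leadingCoeff_mul, Polynomial.leadingCoeff_C]; exact hlc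
    have hLi : Irreducible L := (irreducible_mul_isUnit hC).2 hL0
    have hLG : L ∣ G := by
      refine (hC.mul_right_dvd).2 ⟨q0, hq0⟩
    obtain ⟨q, rfl⟩ := hLG
    have hq : q.Monic := hL.of_mul_monic_left hG
    obtain ⟨n1, n2, he⟩ := H L hL hLi (dvd_mul_right _ _)
    have hp : Prime L := hLi.prime
    rw [len_mul hp.ne_zero (fun α hα => (hp.dvd_or_dvd hα).resolve_right n1),
      len_mul hp.ne_zero (fun α hα => (hp.dvd_or_dvd hα).resolve_right n2), he]
    congr 1
    have hdeg : (L * q).natDegree = L.natDegree + q.natDegree := hL.natDegree_mul hq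
    have hpos : L.natDegree ≠ 0 := fun h0 => hLi.not_isUnit (by
      rw [hL.natDegree_eq_zero.1 h0]; exact isUnit_one)
    exact ih q.natDegree (by omega) q hq rfl (fun M hM hMi hMq => H M hM hMi (hMq.mul_left _))

theorem ev_ne {L : Polynomial V} {n N : ℕ} {hN : N ≠ 0} {a : Fin n → V} (H : RD L n N hN a)
    (hLi : Irreducible L) {p : Polynomial V} (hp : ¬ L ∣ p) (k : Fin n) : evV hN a k p ≠ 0 := by
  intro h0
  apply hp
  have h1 := ((H.monic.irreducible_iff_irreducible_map_fraction_map (K := E)).1 hLi)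
  refine Polynomial.IsPrimitive.dvd_of_fraction_map_dvd_fraction_map (K := E) H.monic.isPrimitive ?_
  by_contra hnd
  obtain ⟨α, β, h2⟩ := h1.coprime_iff_not_dvd.2 hnd
  let exE : E →+* E := IsFractionRing.map (ex_inj N hN)
  have h5 : (exE.comp (algebraMap V E)) = (algebraMap V E).comp (ex N hN) := by
    ext v
    simp [exE, IsFractionRing.map]
  have h6 : ∀ p : Polynomial V, (p.map (algebraMap V E)).eval₂ exE (algebraMap V E (a k)) =
      algebraMap V E (evV hN a k p) := by
    intro p
    rw [Polynomial.eval₂_map, h5, evV, Polynomial.coe_eval₂RingHom, Polynomial.hom_eval₂]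
  have h7 := congrArg (Polynomial.eval₂ exE (algebraMap V E (a k))) h2
  rw [Polynomial.eval₂_add, Polynomial.eval₂_mul, Polynomial.eval₂_mul, h6, h6, H.ev_W, h0] at h7
  simp at h7

theorem tei_loc {f : MvPolynomial (Fin 2) ℂ} {W Q G L : Polynomial V}
    (hW : W.IsDistinguishedAt (IsLocalRing.maximalIdeal V))
    (hWs : (W.map (algebraMap V E)).Separable) (hW0 : W.natDegree ≠ 0)
    (hf : Ph f = W * Q) (hQ : (Q.map (PowerSeries.constantCoeff (R := ℂ))).eval 0 ≠ 0)
    (hG : G.IsDistinguishedAt (IsLocalRing.maximalIdeal V)) (hGd : G ∣ Ph (pderiv 0 f))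
    (hL : L.Monic) (hLi : Irreducible L) (hLG : L ∣ G) :
    ¬ L ∣ Ph f ∧ ¬ L ∣ Polynomial.C PowerSeries.X * Ph (pderiv 1 f) ∧
      len L (Ph f) = len L (Polynomial.C PowerSeries.X * Ph (pderiv 1 f)) := by
  obtain ⟨N, hN, a, H⟩ := exists_RD hL (sep_of_irr hL hLi)
  have hpos : L.natDegree ≠ 0 := fun h0 => hLi.not_isUnit (by
      rw [hL.natDegree_eq_zero.1 h0]; exact isUnit_one)
  have ha : ∀ k, PowerSeries.constantCoeff (a k) = 0 := by
    intro k
    obtain ⟨M, rfl⟩ := hLG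
    exact cc_a hN a k hG (by rw [map_mul, H.ev_W, zero_mul])
  have hp : Prime L := hLi.prime
  have hLQ : ¬ L ∣ Q := by
    rintro ⟨M, rfl⟩
    have := cc_ev hN a ⟨0, Nat.pos_of_ne_zero hpos⟩ (L * M)
    rw [map_mul, H.ev_W, zero_mul, map_zero, ha] at this
    exact hQ this.symm
  have hLf0 : L ∣ Ph (pderiv 0 f) := hLG.trans hGd
  have n1 : ¬ L ∣ Ph f := by
    intro hd
    rw [hf] at hd
    have h1 := (hp.dvd_or_dvd hd).resolve_right hLQ
    rw [Ph_deriv, hf, Polynomial.derivative_mul] at hLf0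
    have h2 : L ∣ Polynomial.derivative W * Q := (dvd_add_left (h1.mul_right _)).1 hLf0
    have h3 := (hp.dvd_or_dvd h2).resolve_right hLQ
    have h4 := ((hL.irreducible_iff_irreducible_map_fraction_map (K := E)).1 hLi)
    refine h4.not_isUnit (hWs.isUnit_of_dvd' (Polynomial.map_dvd _ h1) ?_)
    rw [Polynomial.derivative_map]
    exact Polynomial.map_dvd _ h3
  have hne : ∀ k, evV hN a k (Ph f) ≠ 0 := ev_ne H hLi n1
  have has : ∀ k, Associated (evV hN a k (Ph f))
      (evV hN a k (Polynomial.C PowerSeries.X * Ph (pderiv 1 f))) := by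
    intro k
    have hc : PowerSeries.constantCoeff (evV hN a k (Ph f)) = 0 := by
      rw [cc_ev, hf, ha, Polynomial.map_mul, dist_map hW]
      simp [hW0]
    refine (assoc_X_deriv (hne k) hc).trans ?_
    rw [chain, (by obtain ⟨M, hM⟩ := hLf0; rw [hM, map_mul, H.ev_W, zero_mul] :
      evV hN a k (Ph (pderiv 0 f)) = 0), map_mul, evV_C, ex_X]
    have hu : IsUnit (N : V) := by
      rw [PowerSeries.isUnit_iff_constantCoeff, map_natCast]
      simpa using hN
    obtain ⟨m, rfl⟩ := Nat.exists_eq_succ_of_ne_zero hN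
    refine Associated.symm ⟨hu.unit, ?_⟩
    rw [IsUnit.unit_spec, Nat.succ_sub_one, pow_succ]
    ring
  refine ⟨n1, ?_, H.len_assoc _ _ hne has⟩
  rintro ⟨M, hM⟩
  have := (has ⟨0, Nat.pos_of_ne_zero hpos⟩).ne_zero_iff.1 (hne _)
  rw [hM, map_mul, H.ev_W, zero_mul] at this
  exact this rfl

theorem tei {f : MvPolynomial (Fin 2) ℂ} {W Q G : Polynomial V}
    (hW : W.IsDistinguishedAt (IsLocalRing.maximalIdeal V))
    (hWs : (W.map (algebraMap V E)).Separable) (hW0 : W.natDegree ≠ 0)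
    (hf : Ph f = W * Q) (hQ : (Q.map (PowerSeries.constantCoeff (R := ℂ))).eval 0 ≠ 0)
    (hG : G.IsDistinguishedAt (IsLocalRing.maximalIdeal V)) (hGd : G ∣ Ph (pderiv 0 f)) :
    len G (Ph f) = G.natDegree + len G (Ph (pderiv 1 f)) := by
  rw [← len_CX hG.monic]
  exact len_ind _ _ _ G hG.monic rfl
    (fun L hL hLi hLG => tei_loc hW hWs hW0 hf hQ hG hGd hL hLi hLG)

end TJ

namespace TJ

/-- length of a quotient of the power series ring -/
noncomputable def lenS (p q : PowerSeries V) : ℕ∞ :=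
  Module.length ℂ (PowerSeries V ⧸ Ideal.span {p, q})

/-- inclusion -/
noncomputable def incl : Polynomial V →ₐ[ℂ] PowerSeries V where
  toRingHom := Polynomial.coeToPowerSeries.ringHom
  commutes' := fun c => by
    simp [Polynomial.algebraMap_def, PowerSeries.algebraMap_apply]

theorem incl_apply (p : Polynomial V) : incl p = (p : PowerSeries V) := rfl

theorem rep {P : Polynomial V} (hP : P.IsDistinguishedAt (IsLocalRing.maximalIdeal V))
    (s : PowerSeries V) : ∃ (b : Polynomial V) (γ : PowerSeries V), s = b + P * γ := by
  obtain ⟨e, he⟩ := dist_equiv _ hP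
  obtain ⟨x, hx⟩ := e.surjective (Ideal.Quotient.mk _ s)
  obtain ⟨b, rfl⟩ := Ideal.Quotient.mk_surjective x
  rw [he, eq_comm, Ideal.Quotient.eq, Ideal.mem_span_singleton] at hx
  obtain ⟨γ, h⟩ := hx
  exact ⟨b, γ, by linear_combination h⟩

theorem len_S {P : Polynomial V} (hP : P.IsDistinguishedAt (IsLocalRing.maximalIdeal V))
    (h : Polynomial V) : len P h = lenS P h := by
  let φ : Polynomial V →ₐ[ℂ] (PowerSeries V ⧸ Ideal.span {(P : PowerSeries V), (h : PowerSeries V)}) :=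
    (Ideal.Quotient.mkₐ ℂ _).comp incl
  have hφ : ∀ p, φ p = Ideal.Quotient.mk _ (p : PowerSeries V) := fun p => rfl
  have hsurj : Function.Surjective φ := by
    intro q
    obtain ⟨q, rfl⟩ := Ideal.Quotient.mk_surjective q
    obtain ⟨b, γ, hb⟩ := rep hP q
    refine ⟨b, ?_⟩
    rw [hφ, Ideal.Quotient.eq, Ideal.mem_span_pair]
    exact ⟨-γ, 0, by rw [hb]; ring⟩
  have hker : RingHom.ker φ = Ideal.span {P, h} := by
    ext x
    rw [RingHom.mem_ker, hφ, Ideal.Quotient.eq_zero_iff_mem, Ideal.mem_span_pair,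
      Ideal.mem_span_pair]
    constructor
    · rintro ⟨α, β, hx⟩
      obtain ⟨b, γ, rfl⟩ := rep hP β
      obtain ⟨q, hq⟩ := dist_dvd (h := x - b * h) hP ⟨α + γ * h, by
        push_cast
        linear_combination -hx⟩
      exact ⟨q, b, by linear_combination -hq⟩
    · rintro ⟨α, β, rfl⟩
      exact ⟨α, β, by push_cast; rfl⟩
  have e1 := (Ideal.quotientKerAlgEquivOfSurjective hsurj).toLinearEquiv.length_eq
  have e2 := (Ideal.quotientEquivAlgOfEq ℂ hker).toLinearEquiv.length_eq
  rw [len, ← e2, e1, lenS]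

theorem lenS_comm (p q : PowerSeries V) : lenS p q = lenS q p := by
  rw [lenS, lenS, Set.pair_comm]

theorem lenS_unit {u : PowerSeries V} (hu : IsUnit u) (p q : PowerSeries V) :
    lenS (p * u) q = lenS p q := by
  rw [lenS, lenS, Ideal.span_insert, Ideal.span_insert p, Ideal.span_singleton_mul_right_unit hu]

theorem lenS_add (p q c : PowerSeries V) : lenS p (q + p * c) = lenS p q := by
  have : Ideal.span {p, q + p * c} = Ideal.span {p, q} := by
    ext x
    rw [Ideal.mem_span_pair, Ideal.mem_span_pair]
    constructor
    · rintro ⟨α, β, rfl⟩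
      exact ⟨α + β * c, β, by ring⟩
    · rintro ⟨α, β, rfl⟩
      exact ⟨α - β * c, β, by ring⟩
  rw [lenS, lenS, this]

theorem coe_unit {Q : Polynomial V} (h : IsUnit (Q : PowerSeries V)) :
    (Q.map (PowerSeries.constantCoeff (R := ℂ))).eval 0 ≠ 0 := by
  rw [PowerSeries.isUnit_iff_constantCoeff, PowerSeries.isUnit_iff_constantCoeff] at h
  rw [← Polynomial.coeff_zero_eq_eval_zero, Polynomial.coeff_map]
  simpa using h

theorem mu_le {f : MvPolynomial (Fin 2) ℂ} {W : Polynomial V} {u : PowerSeries V}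
    (hW : W.IsDistinguishedAt (IsLocalRing.maximalIdeal V))
    (hWs : (W.map (algebraMap V E)).Separable) (hW0 : W.natDegree ≠ 0)
    (hu : IsUnit u) (hf : (Ph f : PowerSeries V) = W * u)
    {N : ℕ} {hN : N ≠ 0} {a : Fin W.natDegree → V} (H : RD W W.natDegree N hN a) :
    lenS (Ph (pderiv 0 f)) (Ph (pderiv 1 f)) ≤ dl H.Rm H.Om + dl H.Rm H.Om := by
  obtain ⟨Q, hQ⟩ := dist_dvd hW ⟨u, hf⟩
  have hWne : (W : PowerSeries V) ≠ 0 := by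
    rw [Ne, Polynomial.coe_eq_zero_iff]; exact hW.monic.ne_zero
  have hQu : (Q : PowerSeries V) = u := by
    apply mul_left_cancel₀ hWne
    rw [← hf, hQ, Polynomial.coe_mul]
  have hQ' : IsUnit (Q : PowerSeries V) := hQu ▸ hu
  have hQ0 := coe_unit hQ'
  have hc : (Ph (pderiv 0 f)).map (PowerSeries.constantCoeff (R := ℂ)) =
      Polynomial.derivative (Polynomial.X ^ W.natDegree *
        Q.map (PowerSeries.constantCoeff (R := ℂ))) := by
    rw [Ph_deriv, ← Polynomial.derivative_map, hQ, Polynomial.map_mul, dist_map hW]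
  have hQ1 : Q.map (PowerSeries.constantCoeff (R := ℂ)) ≠ 0 := by
    intro h; rw [h] at hQ0; simp at hQ0
  have hne : (Ph (pderiv 0 f) : PowerSeries V).map (PowerSeries.constantCoeff (R := ℂ)) ≠ 0 := by
    rw [← Polynomial.polynomial_map_coe, Ne, Polynomial.coe_eq_zero_iff, hc]
    intro h
    have h2 := Polynomial.derivative_eq_zero.1 h
    rw [Polynomial.natDegree_mul (pow_ne_zero _ Polynomial.X_ne_zero) hQ1,
      Polynomial.natDegree_X_pow] at h2
    omega
  obtain ⟨G, v, hGw⟩ := PowerSeries.exists_isWeierstrassFactorization (residue_ne_zero hne)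
  have hG := hGw.isDistinguishedAt
  obtain ⟨Q2, hQ2⟩ := dist_dvd hG ⟨v, hGw.eq_mul⟩
  have hGne : (G : PowerSeries V) ≠ 0 := by
    rw [Ne, Polynomial.coe_eq_zero_iff]; exact hG.monic.ne_zero
  have hQ2u : (Q2 : PowerSeries V) = v := by
    apply mul_left_cancel₀ hGne
    rw [← hGw.eq_mul, hQ2, Polynomial.coe_mul]
  have hQ20 := coe_unit (hQ2u ▸ hGw.isUnit : IsUnit (Q2 : PowerSeries V))
  have hdeg : W.natDegree ≤ G.natDegree + 1 := by
    have h1 : (Polynomial.X : Polynomial ℂ) ^ (W.natDegree - 1) ∣ Polynomial.X ^ G.natDegree *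
        Q2.map (PowerSeries.constantCoeff (R := ℂ)) := by
      rw [← dist_map hG, ← Polynomial.map_mul, ← hQ2, hc, Polynomial.derivative_mul,
        Polynomial.derivative_X_pow]
      refine dvd_add ((Dvd.intro_left _ rfl).mul_right _) ?_
      exact (pow_dvd_pow _ (Nat.sub_le _ _)).mul_right _
    have h2 := Polynomial.prime_X.pow_dvd_of_dvd_mul_right _ (by
      rw [Polynomial.X_dvd_iff, Polynomial.coeff_zero_eq_eval_zero]; exact hQ20) h1
    have h3 := (pow_dvd_pow_iff Polynomial.X_ne_zero Polynomial.not_isUnit_X).1 h2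
    omega
  have e1 : lenS (Ph (pderiv 0 f)) (Ph (pderiv 1 f)) = len G (Ph (pderiv 1 f)) := by
    rw [hGw.eq_mul, lenS_unit hGw.isUnit, len_S hG]
  have e2 : len W (Polynomial.derivative W) = len G (Ph f) := by
    rw [len_S hW, len_S hG, ← lenS_unit hGw.isUnit (G : PowerSeries V), ← hGw.eq_mul,
      lenS_comm (Ph (pderiv 0 f) : PowerSeries V), hf,
      lenS_unit hu, Ph_deriv, hQ, Polynomial.derivative_mul]
    push_cast
    rw [lenS_add, lenS_comm, lenS_comm (W : PowerSeries V), lenS_unit hQ']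
  have e3 := H.main hW0
  rw [e2, tei hW hWs hW0 hQ hQ0 hG ⟨Q2, hQ2⟩, ← e1] at e3
  have e4 : (W.natDegree : ℕ∞) ≤ G.natDegree + 1 := by exact_mod_cast hdeg
  have e5 := e3.trans (add_le_add_right e4 _)
  generalize lenS _ _ = m at *
  have hfin : ((G.natDegree : ℕ∞) + 1) ≠ ⊤ := by exact_mod_cast ENat.natCast_ne_top (G.natDegree + 1)
  refine (ENat.add_le_add_iff_right hfin).1 ?_
  refine le_trans (le_of_eq ?_) e5
  ring

end TJ

namespace TJ

/-- coordinate change images -/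
noncomputable def ab (c : ℂ) : Fin 2 → MvPowerSeries (Fin 2) ℂ :=
  ![MvPowerSeries.X 0, MvPowerSeries.X 1 + MvPowerSeries.C c * MvPowerSeries.X 0]

theorem ab_subst (c : ℂ) : MvPowerSeries.HasSubst (ab c) := by
  apply MvPowerSeries.hasSubst_of_constantCoeff_zero
  intro i
  fin_cases i <;> simp [ab]

/-- coordinate change -/
noncomputable def Tc (c : ℂ) : MvPowerSeries (Fin 2) ℂ →ₐ[ℂ] MvPowerSeries (Fin 2) ℂ :=
  MvPowerSeries.substAlgHom (ab_subst c)

theorem Tc_0 (c : ℂ) : Tc c (MvPowerSeries.X 0) = MvPowerSeries.X 0 := by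
  rw [Tc, MvPowerSeries.substAlgHom_X]; rfl

theorem Tc_1 (c : ℂ) : Tc c (MvPowerSeries.X 1) =
    MvPowerSeries.X 1 + MvPowerSeries.C c * MvPowerSeries.X 0 := by
  rw [Tc, MvPowerSeries.substAlgHom_X]; rfl

theorem Tc_C (c d : ℂ) : Tc c (MvPowerSeries.C d) = MvPowerSeries.C d :=
  (Tc c).commutes d

theorem Tc_Tc (c d : ℂ) (h : c + d = 0) (p : MvPowerSeries (Fin 2) ℂ) : Tc d (Tc c p) = p := by
  have h1 : (fun s => MvPowerSeries.subst (ab d) (ab c s)) = 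
      (MvPowerSeries.X : Fin 2 → MvPowerSeries (Fin 2) ℂ) := by
    funext s
    rw [← MvPowerSeries.coe_substAlgHom (R := ℂ) (ab_subst d)]
    change Tc d (ab c s) = _
    fin_cases s
    · exact Tc_0 d
    · change Tc d (MvPowerSeries.X 1 + MvPowerSeries.C c * MvPowerSeries.X 0) = MvPowerSeries.X 1
      rw [map_add, map_mul, Tc_0, Tc_1, Tc_C, add_assoc, ← add_mul, ← map_add, add_comm d, h]
      simp
  have h2 := MvPowerSeries.subst_comp_subst_apply (ab_subst c) (ab_subst d) p
  rw [h1, MvPowerSeries.subst_self] at h2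
  rw [Tc, Tc, MvPowerSeries.substAlgHom_apply, MvPowerSeries.substAlgHom_apply]
  exact h2

/-- coordinate change on polynomials -/
noncomputable def tc (c : ℂ) : MvPolynomial (Fin 2) ℂ →ₐ[ℂ] MvPolynomial (Fin 2) ℂ :=
  MvPolynomial.aeval ![X 0, X 1 + C c * X 0]

theorem tc_0 (c : ℂ) : tc c (X 0) = X 0 := by simp [tc]
theorem tc_1 (c : ℂ) : tc c (X 1) = X 1 + C c * X 0 := by simp [tc]

theorem Tc_coe (c : ℂ) (p : MvPolynomial (Fin 2) ℂ) :
    Tc c (p : MvPowerSeries (Fin 2) ℂ) = (tc c p : MvPolynomial (Fin 2) ℂ) := by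
  induction p using MvPolynomial.induction_on with
  | C d => 
    rw [MvPolynomial.coe_C, Tc_C]; simp
  | add p q hp hq => simp [hp, hq]
  | mul_X p i hp =>
    fin_cases i
    · simp [hp, Tc_0, tc_0]
    · simp [hp, Tc_1, tc_1]

theorem tc_d1 (c : ℂ) (f : MvPolynomial (Fin 2) ℂ) :
    pderiv 1 (tc c f) = tc c (pderiv 1 f) := by
  induction f using MvPolynomial.induction_on with
  | C d => simp
  | add p q hp hq => simp [hp, hq]
  | mul_X p i hp =>
    fin_cases i
    · simp [hp, tc_0]
    · simp [hp, tc_1, pderiv_X]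

theorem tc_d0 (c : ℂ) (f : MvPolynomial (Fin 2) ℂ) :
    pderiv 0 (tc c f) = tc c (pderiv 0 f) + C c * tc c (pderiv 1 f) := by
  induction f using MvPolynomial.induction_on with
  | C d => simp
  | add p q hp hq => simp [hp, hq]; ring
  | mul_X p i hp =>
    fin_cases i
    · simp [hp, tc_0, pderiv_X]; ring
    · simp [hp, tc_1, pderiv_X]; ring

/-- index bijection -/
def fo : Fin 2 ≃ Option Unit where
  toFun := ![none, some ()]
  invFun := fun o => match o with | none => 0 | some _ => 1
  left_inv := by intro i; fin_cases i <;> rfl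
  right_inv := by intro i; rcases i with _ | ⟨⟨⟩⟩ <;> rfl

/-- two variable series as iterated series -/
noncomputable def Th : MvPowerSeries (Fin 2) ℂ ≃ₐ[ℂ] PowerSeries V :=
  (MvPowerSeries.renameEquiv ℂ fo).trans (MvPowerSeries.optionEquivLeft Unit ℂ)

theorem Th_0 : Th (MvPowerSeries.X 0) = PowerSeries.X := by
  change MvPowerSeries.optionEquivLeft Unit ℂ (MvPowerSeries.rename fo _) = _
  rw [MvPowerSeries.rename_X]
  exact MvPowerSeries.optionEquivLeft_X_none

theorem Th_1 : Th (MvPowerSeries.X 1) = PowerSeries.C PowerSeries.X := by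
  change MvPowerSeries.optionEquivLeft Unit ℂ (MvPowerSeries.rename fo _) = _
  rw [MvPowerSeries.rename_X]
  exact MvPowerSeries.optionEquivLeft_X_some _

theorem Th_C (d : ℂ) : Th (MvPowerSeries.C d) = PowerSeries.C (PowerSeries.C d) := by
  change MvPowerSeries.optionEquivLeft Unit ℂ (MvPowerSeries.rename fo _) = _
  rw [MvPowerSeries.rename_C]
  exact MvPowerSeries.optionEquivLeft_C _

theorem Th_coe (p : MvPolynomial (Fin 2) ℂ) :
    Th (p : MvPowerSeries (Fin 2) ℂ) = (Ph p : PowerSeries V) := by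
  induction p using MvPolynomial.induction_on with
  | C d => 
    rw [MvPolynomial.coe_C, Th_C, Ph_C]; simp
  | add p q hp hq => simp [hp, hq]
  | mul_X p i hp =>
    fin_cases i
    · simp [hp, Th_0, Ph_0]
    · simp [hp, Th_1, Ph_1]

/-- combined isomorphism -/
noncomputable def Omg (c : ℂ) : MvPowerSeries (Fin 2) ℂ ≃ₐ[ℂ] PowerSeries V :=
  (AlgEquiv.ofAlgHom (Tc c) (Tc (-c)) (AlgHom.ext fun p => Tc_Tc (-c) c (by simp) p)
    (AlgHom.ext fun p => Tc_Tc c (-c) (by simp) p)).trans Th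

theorem Omg_coe (c : ℂ) (p : MvPolynomial (Fin 2) ℂ) :
    Omg c (p : MvPowerSeries (Fin 2) ℂ) = (Ph (tc c p) : PowerSeries V) := by
  rw [← Th_coe, ← Tc_coe]; rfl

theorem Ph_eval (c y : ℂ) (f : MvPolynomial (Fin 2) ℂ) :
    ((Ph (tc c f)).map (PowerSeries.constantCoeff (R := ℂ))).eval y =
        MvPolynomial.eval ![y, c * y] f := by
  induction f using MvPolynomial.induction_on with
  | C d =>
    have : Ph (tc c (C d)) = Polynomial.C (PowerSeries.C d) := by
      rw [← Ph_C]; simp [tc]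
    rw [this]; simp
  | add p q hp hq => simp [hp, hq]
  | mul_X p i hp =>
    fin_cases i
    · simp [hp, tc_0, Ph_0]
    · simp [hp, tc_1, Ph_1, Ph_0, Ph_C]

theorem exists_c (f : MvPolynomial (Fin 2) ℂ) (hf : f ≠ 0) :
    ∃ c, (Ph (tc c f)).map (PowerSeries.constantCoeff (R := ℂ)) ≠ 0 := by
  by_contra! hcon
  have key : ∀ (c y : ℂ), MvPolynomial.eval ![y, c * y] f = 0 := by
    intro c y
    have h1 := Ph_eval c y f
    rw [← h1, hcon]; simp
  have h2 : f * X 0 = 0 := by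
    apply MvPolynomial.funext
    intro v
    rw [map_mul, eval_X, map_zero]
    by_cases hv : v 0 = 0
    · rw [hv, mul_zero]
    · have := key (v 1 / v 0) (v 0)
      rw [div_mul_cancel₀ _ hv] at this
      have hv2 : ![v 0, v 1] = v := by ext i; fin_cases i <;> rfl
      rw [hv2] at this
      rw [this, zero_mul]
  exact (mul_ne_zero hf (X_ne_zero 0)) h2

end TJ

namespace TJ

theorem weier {γ : PowerSeries V} (hi : Irreducible γ)
    (hγ : γ.map (PowerSeries.constantCoeff (R := ℂ)) ≠ 0) :
    ∃ w : Polynomial V, w.IsDistinguishedAt (IsLocalRing.maximalIdeal V) ∧ Irreducible w ∧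
      Associated (w : PowerSeries V) γ := by
  obtain ⟨w, u, hw⟩ := PowerSeries.exists_isWeierstrassFactorization (residue_ne_zero hγ)
  have hd := hw.isDistinguishedAt
  have ha : Associated (w : PowerSeries V) γ := ⟨hw.isUnit.unit, hw.eq_mul.symm⟩
  have hwi : Irreducible (w : PowerSeries V) := ha.irreducible_iff.2 hi
  refine ⟨w, hd, ?_, ha⟩
  have hone : ∀ p q : Polynomial V, p.Monic → p * q = w → IsUnit (p : PowerSeries V) → p = 1 := by
    intro p q hp hpq hu
    have h1 := coe_unit hu
    have h2 : p.map (PowerSeries.constantCoeff (R := ℂ)) ∣ Polynomial.X ^ w.natDegree := by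
      rw [← dist_map hd, ← hpq, Polynomial.map_mul]
      exact dvd_mul_right _ _
    obtain ⟨i, -, hi⟩ := (dvd_prime_pow Polynomial.prime_X _).1 h2
    have h3 := Polynomial.eq_of_monic_of_associated (hp.map _) (Polynomial.monic_X_pow i) hi
    have h4 : i = 0 := by
      by_contra h
      rw [h3] at h1
      simp [h] at h1
    rw [h4, pow_zero] at h3
    rw [← hp.natDegree_eq_zero, ← hp.natDegree_map (PowerSeries.constantCoeff (R := ℂ)), h3]
    simp
  rw [Polynomial.irreducible_of_monic hd.monic (by rintro rfl; exact hwi.not_isUnit (by simp))]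
  intro p q hp hq hpq
  have h1 : (w : PowerSeries V) = p * q := by rw [← hpq]; simp
  rcases hwi.isUnit_or_isUnit h1 with h | h
  · exact Or.inl (hone p q hp hpq h)
  · exact Or.inr (hone q p hq (by rw [mul_comm]; exact hpq) h)

theorem fin_of_len {M : Type} [AddCommGroup M] [Module ℂ M] (h : Module.length ℂ M ≠ ⊤) :
    Module.Finite ℂ M := by
  have := isFiniteLength_iff_isNoetherian_isArtinian.1 (Module.length_ne_top_iff.1 h)
  have := this.1
  infer_instance

/-- quotient map -/
noncomputable def qm (f : MvPolynomial (Fin 2) ℂ) : MvPowerSeries (Fin 2) ℂ →ₐ[ℂ] CurveGermRing f :=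
  Ideal.Quotient.mkₐ ℂ _

theorem qm_surj (f : MvPolynomial (Fin 2) ℂ) : Function.Surjective (qm f) :=
  Ideal.Quotient.mk_surjective

theorem qm_zero (f : MvPolynomial (Fin 2) ℂ) (p) : qm f p = 0 ↔ (f : MvPowerSeries (Fin 2) ℂ) ∣ p := by
  rw [← Ideal.mem_span_singleton]
  exact Ideal.Quotient.eq_zero_iff_mem

theorem mil_len (f : MvPolynomial (Fin 2) ℂ) (c : ℂ) :
    Module.length ℂ (MvPowerSeries (Fin 2) ℂ ⧸ Ideal.span
      {(↑(pderiv 0 f) : MvPowerSeries (Fin 2) ℂ), (↑(pderiv 1 f) : MvPowerSeries (Fin 2) ℂ)}) =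
    lenS (Ph (pderiv 0 (tc c f))) (Ph (pderiv 1 (tc c f))) := by
  have h1 : lenS (Ph (pderiv 0 (tc c f))) (Ph (pderiv 1 (tc c f))) =
      lenS (Ph (tc c (pderiv 0 f))) (Ph (tc c (pderiv 1 f))) := by
    rw [tc_d0, tc_d1, lenS_comm, map_add, map_mul, mul_comm, Polynomial.coe_add,
      Polynomial.coe_mul, lenS_add, lenS_comm]
  rw [h1, lenS]
  refine (Ideal.quotientEquivAlg _ _ (Omg c) ?_).toLinearEquiv.length_eq
  rw [Ideal.map_span, Set.image_pair]
  congr 2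
  · exact (Omg_coe _ _).symm
  · exact congrArg _ (Omg_coe _ _).symm

theorem core (f : MvPolynomial (Fin 2) ℂ)
    (r : ℕ) (hr : 1 ≤ r) (u : (MvPowerSeries (Fin 2) ℂ)ˣ)
    (g : Fin r → MvPowerSeries (Fin 2) ℂ)
    (hirr : ∀ i, Irreducible (g i))
    (hna : ∀ i j, i ≠ j → ¬ Associated (g i) (g j))
    (hF : (↑f : MvPowerSeries (Fin 2) ℂ) = ↑u * ∏ i, g i)
    (K : Type) [CommRing K] [Algebra (CurveGermRing f) K]
    [IsFractionRing (CurveGermRing f) K] [Algebra ℂ K]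
    [IsScalarTower ℂ (CurveGermRing f) K] :
    tjurinaNumber f ≤ milnorNumber f ∧ milnorNumber f ≤ 2 * deltaInvariant f K := by
  have hf0 : f ≠ 0 := by
    rintro rfl
    rw [MvPolynomial.coe_zero, eq_comm] at hF
    exact mul_ne_zero u.ne_zero (Finset.prod_ne_zero_iff.2 fun i _ => (hirr i).ne_zero) hF
  obtain ⟨c, hc⟩ := exists_c f hf0
  have hF' : (Ph (tc c f) : PowerSeries V) = Omg c u * ∏ i, Omg c (g i) := by
    rw [← Omg_coe, hF, map_mul, map_prod]
  have hγ : ∀ i, (Omg c (g i)).map (PowerSeries.constantCoeff (R := ℂ)) ≠ 0 := by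
    intro i hi
    apply hc
    rw [← Polynomial.coe_eq_zero_iff, Polynomial.polynomial_map_coe, hF', map_mul, map_prod,
      Finset.prod_eq_zero (Finset.mem_univ i) hi, mul_zero]
  have hgi : ∀ i, Irreducible (Omg c (g i)) := fun i =>
    (MulEquiv.irreducible_iff (Omg c)).2 (hirr i)
  choose w hwd hwi hwa using fun i => weier (hgi i) (hγ i)
  have hwne : ∀ i j, i ≠ j → w i ≠ w j := by
    intro i j hij h
    have h1 : Associated (Omg c (g i)) (Omg c (g j)) := (hwa i).symm.trans (h ▸ hwa j)
    have h2 := h1.map (Omg c).symm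
    simp only [AlgEquiv.symm_apply_apply] at h2
    exact hna i j hij h2
  set W : Polynomial V := ∏ i, w i with hWdef
  have hWm : W.Monic := Polynomial.monic_prod_of_monic _ _ fun i _ => (hwd i).monic
  have hWs := sep_prod w (fun i => (hwd i).monic) hwi hwne
  rw [← hWdef] at hWs
  have hdeg : W.natDegree = ∑ i, (w i).natDegree :=
    Polynomial.natDegree_prod_of_monic _ _ fun i _ => (hwd i).monic
  have hW : W.IsDistinguishedAt (IsLocalRing.maximalIdeal V) := by
    apply dist_of_map hWm
    rw [hdeg, hWdef, Polynomial.map_prod, Finset.prod_congr rfl (fun i _ => dist_map (hwd i)),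
      Finset.prod_pow_eq_pow_sum]
  have hW0 : W.natDegree ≠ 0 := by
    intro h
    rw [hWm.natDegree_eq_zero] at h
    exact (hwi ⟨0, hr⟩).not_isUnit (isUnit_of_dvd_one (h ▸ Finset.dvd_prod_of_mem w (Finset.mem_univ _)))
  have hass : Associated (W : PowerSeries V) (Ph (tc c f) : PowerSeries V) := by
    have h1 : (W : PowerSeries V) = ∏ i, (w i : PowerSeries V) :=
      map_prod incl w Finset.univ
    rw [h1, hF']
    refine (Associated.prod _ _ _ fun i _ => hwa i).trans ?_
    rw [mul_comm]
    have hu : IsUnit (Omg c u) := u.isUnit.map (Omg c)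
    exact ⟨hu.unit, rfl⟩
  obtain ⟨v, hv⟩ := hass
  obtain ⟨N, hN, a, H⟩ := exists_RD hWm hWs
  have hmu := mu_le hW hWs hW0 v.isUnit hv.symm H
  rw [← mil_len] at hmu
  let ψ : Polynomial V →ₐ[ℂ] CurveGermRing f :=
    (qm f).comp (((Omg c).symm : PowerSeries V →ₐ[ℂ] MvPowerSeries (Fin 2) ℂ).comp incl)
  have hψ : ∀ p, ψ p = qm f ((Omg c).symm (p : PowerSeries V)) := fun p => rfl
  have hdvd : ∀ s : PowerSeries V, qm f ((Omg c).symm s) = 0 ↔ (W : PowerSeries V) ∣ s := by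
    intro s
    rw [qm_zero, ← map_dvd_iff (Omg c), AlgEquiv.apply_symm_apply, Omg_coe, ← hv, Units.mul_right_dvd]
  have hs : Function.Surjective ψ := by
    intro x
    obtain ⟨y, rfl⟩ := qm_surj f x
    obtain ⟨b, γ, hb⟩ := rep hW (Omg c y)
    refine ⟨b, ?_⟩
    rw [hψ, ← sub_eq_zero, ← (Omg c).symm_apply_apply y, ← map_sub, ← map_sub, hdvd, hb]
    exact ⟨-γ, by simp⟩
  have hk : ∀ p, ψ p = 0 ↔ W ∣ p := by
    intro p
    rw [hψ, hdvd]
    exact ⟨dist_dvd hW, fun ⟨q, hq⟩ => ⟨q, by rw [hq]; simp⟩⟩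
  have hde := H.delta_eq ψ hs hk K
  have hfin := H.fin
  rw [← hde] at hfin hmu
  have hmfin := ne_top_of_le_ne_top (by simpa using hfin) hmu
  have i1 := fin_of_len hfin
  have i2 := fin_of_len hmfin
  rw [Module.length_eq_finrank, Module.length_eq_finrank] at hmu
  constructor
  · have hle : Ideal.span {(↑(pderiv 0 f) : MvPowerSeries (Fin 2) ℂ),
        (↑(pderiv 1 f) : MvPowerSeries (Fin 2) ℂ)} ≤ Ideal.span {(↑f : MvPowerSeries (Fin 2) ℂ),
       (↑(pderiv 0 f) : MvPowerSeries (Fin 2) ℂ), (↑(pderiv 1 f) : MvPowerSeries (Fin 2) ℂ)} :=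
      Ideal.span_mono (Set.subset_insert _ _)
    exact LinearMap.finrank_le_finrank_of_surjective
      (f := (Ideal.Quotient.factorₐ ℂ hle).toLinearMap) (Ideal.Quotient.factor_surjective hle)
  · rw [two_mul]
    exact_mod_cast hmu

end TJ

/-- For a polynomial `f` vanishing at the origin whose image `F` in `ℂ[[x,y]]` is reduced
(with `r ≥ 1` pairwise non-associated irreducible formal factors), the Tjurina number, Milnor
number, and δ-invariant satisfy `τ(f) ≤ μ(f) ≤ 2δ(f)` (used in the proof of Proposition 3.1). -/
theorem tjurina_le_milnor_le_two_delta (f : MvPolynomial (Fin 2) ℂ)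
    (h0 : constantCoeff f = 0)
    (r : ℕ) (hr : 1 ≤ r) (u : (MvPowerSeries (Fin 2) ℂ)ˣ)
    (g : Fin r → MvPowerSeries (Fin 2) ℂ)
    (hirr : ∀ i, Irreducible (g i))
    (hna : ∀ i j, i ≠ j → ¬ Associated (g i) (g j))
    (hF : (↑f : MvPowerSeries (Fin 2) ℂ) = ↑u * ∏ i, g i)
    (K : Type) [CommRing K] [Algebra (CurveGermRing f) K]
    [IsFractionRing (CurveGermRing f) K] [Algebra ℂ K]
    [IsScalarTower ℂ (CurveGermRing f) K] :
    tjurinaNumber f ≤ milnorNumber f ∧ milnorNumber f ≤ 2 * deltaInvariant f K := by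
  exact TJ.core f r hr u g hirr hna hF K
end

section
/- Let ρ ≥ 1 be an integer and let d : Fin ρ → ℚ satisfy d 0 > 0 and d j < 0 for every j ≠ 0. Fix n : Fin ρ → ℚ, a vector β : Fin ρ → ℚ, and a positive integer N. Then the set of pairs (v, w) of vectors in ℚ^ρ satisfying: (i) N·(v j) ∈ ℤ and N·(w j) ∈ ℤ for every j; (ii) v + w = β; (iii) v 0 > 0 and w 0 > 0; and (iv) for every j ≠ 0, (n j)·(d 0)·(v 0) + (d j)·(v j) > 0 and (n j)·(d 0)·(w 0) + (d j)·(w j) > 0, is finite. -/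
lemma finite_bdd_denom (N : ℕ) (hN : 0 < N) (C : ℚ) :
    {x : ℚ | (∃ a : ℤ, (N : ℚ) * x = a) ∧ |x| ≤ C}.Finite := by
  have hN' : (0 : ℚ) < N := by exact_mod_cast hN
  refine ((Set.finite_Icc (-⌈(N : ℚ) * C⌉) ⌈(N : ℚ) * C⌉).image
    (fun a : ℤ => (a : ℚ) / N)).subset ?_
  rintro x ⟨⟨a, ha⟩, hx⟩
  obtain ⟨h1, h2⟩ := abs_le.mp hx
  have hc := Int.le_ceil ((N : ℚ) * C)
  have e1 : (N : ℚ) * x ≤ N * C := mul_le_mul_of_nonneg_left h2 hN'.le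
  have e2 : (N : ℚ) * (-C) ≤ N * x := mul_le_mul_of_nonneg_left h1 hN'.le
  refine ⟨a, ⟨?_, ?_⟩, ?_⟩
  · have : ((-⌈(N : ℚ) * C⌉ : ℤ) : ℚ) ≤ a := by push_cast; linarith
    exact_mod_cast this
  · have : (a : ℚ) ≤ (⌈(N : ℚ) * C⌉ : ℤ) := by linarith
    exact_mod_cast this
  · show (a : ℚ) / N = x
    rw [← ha]; field_simp

/-- Finiteness of numerical decompositions (the numerical core of Lemma 5.1): with an
"orthogonal basis" datum `d : Fin ρ → ℚ` with `d 0 > 0` and `d j < 0` for `j ≠ 0`,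
coefficients `n`, a fixed class `β`, and a denominator-clearing integer `N > 0`, the set of
pairs `(v, w)` of vectors with `N·v, N·w` integral, `v + w = β`, positive pairing with the
ample class (`v 0 > 0`, `w 0 > 0`), and positive pairing with each class `n j · D₀ + D_j`,
is finite. -/
theorem finite_decompositions (ρ : ℕ) [NeZero ρ] (d : Fin ρ → ℚ) (hd0 : 0 < d 0)
    (hdneg : ∀ j : Fin ρ, j ≠ 0 → d j < 0) (n : Fin ρ → ℚ) (β : Fin ρ → ℚ)
    (N : ℕ) (hN : 0 < N) :
    {p : (Fin ρ → ℚ) × (Fin ρ → ℚ) |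
      (∀ j, ∃ a : ℤ, (N : ℚ) * p.1 j = a) ∧
      (∀ j, ∃ a : ℤ, (N : ℚ) * p.2 j = a) ∧
      p.1 + p.2 = β ∧
      0 < p.1 0 ∧ 0 < p.2 0 ∧
      (∀ j : Fin ρ, j ≠ 0 →
        0 < n j * d 0 * p.1 0 + d j * p.1 j ∧
        0 < n j * d 0 * p.2 0 + d j * p.2 j)}.Finite := by
  have hfin : (Set.univ.pi fun j : Fin ρ => {x : ℚ | (∃ a : ℤ, (N : ℚ) * x = a) ∧
      |x| ≤ |β 0| + (|n j| * d 0 * |β 0| + |d j * β j|) / |d j|}).Finite :=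
    Set.Finite.pi fun j => finite_bdd_denom N hN _
  refine (hfin.image (fun v => (v, β - v))).subset ?_
  rintro ⟨v, w⟩ ⟨hv, hw, hs, hv0, hw0, H⟩
  simp only at hv hw hs hv0 hw0 H
  refine ⟨v, ?_, by simp [← hs]⟩
  intro j _
  refine ⟨hv j, ?_⟩
  have hb0 : v 0 + w 0 = β 0 := congrFun hs 0
  have hbj : v j + w j = β j := congrFun hs j
  have hle := le_abs_self (β 0)
  by_cases hj : j = 0
  · subst hj
    have : 0 ≤ (|n 0| * d 0 * |β 0| + |d 0 * β 0|) / |d 0| := by positivity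
    rw [abs_of_pos hv0]; linarith
  · obtain ⟨h1, h2⟩ := H j hj
    have hdj : 0 < |d j| := abs_pos.mpr (hdneg j hj).ne
    have key : ∀ t : ℚ, 0 < t → t ≤ |β 0| → n j * d 0 * t ≤ |n j| * d 0 * |β 0| := by
      intro t ht htb
      have := le_abs_self (n j)
      gcongr
    have k1 := key (v 0) hv0 (by linarith)
    have k2 := key (w 0) hw0 (by linarith)
    have e : d j * v j + d j * w j = d j * β j := by rw [← hbj]; ring
    have : |v j| ≤ (|n j| * d 0 * |β 0| + |d j * β j|) / |d j| := by
      rw [le_div_iff₀ hdj, ← abs_mul, mul_comm (v j), abs_le]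
      have a1 := le_abs_self (d j * β j)
      have a2 := abs_nonneg (d j * β j)
      constructor <;> linarith
    have := abs_nonneg (β 0)
    linarith
end
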